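/- For every integer K > 1 there exists an ergodic C^{K-1} diffeomorphism T of the torus 𝕋² preserving the Haar–Lebesgue probability measure λ such that T is measure-theoretically isomorphic to the rotation of the circle by some irrational number and the upper topological slow entropy of T with respect to the polynomial scaling family a^{pol}_m(t) = m^t satisfies 1/K⁴ ≤ ent̄^top_{a^{pol}}(T) < 1/(K⁴−K−2). -/

import Mathlib

open MeasureTheory Filter Set
open scoped Topology ENNReal NNReal

noncomputable section

/-- The Bowen metric `d_n^T(x,y) = max_{0 ≤ i ≤ n-1} d(T^i x, T^i y)`. -/
def bowenDist {X : Type*} [PseudoMetricSpace X] (T : X → X) (n : ℕ) (x y : X) : ℝ :=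
  (((Finset.range n).sup fun i => nndist (T^[i] x) (T^[i] y)) : ℝ≥0)

/-- `N_{d_n^T}(ε)`: the minimal number of `(ε,n)`-Bowen balls of `T` needed to cover the
whole space. -/
def bowenCoverNum {X : Type*} [PseudoMetricSpace X] (T : X → X) (n : ℕ) (ε : ℝ) : ℕ :=
  sInf {N : ℕ | ∃ F : Finset X, F.card = N ∧ ∀ y : X, ∃ x ∈ F, bowenDist T n x y < ε}

/-- `N(ε)`: the supremum (`0` if the set is empty, by the `Real.sSup` convention) of all
`t > 0` such that `limsup_n N_{d_n^T}(ε) / a_n(t) > 0`. -/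
def topSlowEntFun {X : Type*} [PseudoMetricSpace X] (T : X → X) (a : ℕ → ℝ → ℝ) (ε : ℝ) : ℝ :=
  sSup {t : ℝ | 0 < t ∧
    0 < Filter.atTop.limsup fun n => (bowenCoverNum T n ε : ℝ≥0∞) / ENNReal.ofReal (a n t)}

/-- The upper topological slow entropy of `T` with respect to the scaling family `a`
equals `E`, i.e. `N(ε) → E` as `ε → 0⁺`. -/
def HasUpperTopSlowEntropy {X : Type*} [PseudoMetricSpace X] (T : X → X)
    (a : ℕ → ℝ → ℝ) (E : ℝ) : Prop :=
  Filter.Tendsto (topSlowEntFun T a) (𝓝[>] (0 : ℝ)) (𝓝 E)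

/-- The circle `𝕋¹ = ℝ/ℤ` with its quotient metric and Haar–Lebesgue probability
measure `volume`. -/
abbrev Torus1 : Type := AddCircle (1 : ℝ)

/-- The 2-torus `𝕋² = ℝ²/ℤ²`, with its quotient (flat) metric, its Borel σ-algebra and
its Haar–Lebesgue probability measure `volume`. -/
abbrev Torus2 : Type := AddCircle (1 : ℝ) × AddCircle (1 : ℝ)

/-- Canonical projection `ℝ² → 𝕋²`. -/
def torusProj : ℝ × ℝ → Torus2 := fun p => ((p.1 : Torus1), (p.2 : Torus1))

/-- `F : ℝ² → ℝ²` is a lift of `T : 𝕋² → 𝕋²`. -/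
def IsLiftOf (F : ℝ × ℝ → ℝ × ℝ) (T : Torus2 → Torus2) : Prop :=
  ∀ p, torusProj (F p) = T (torusProj p)

/-- `T` is a `C^k` diffeomorphism of the torus: it is a bijection and both `T` and `T⁻¹`
admit `C^k` lifts to the universal cover `ℝ²`. -/
def IsCkTorusDiffeo (k : ℕ∞) (T : Torus2 → Torus2) : Prop :=
  Function.Bijective T ∧
  (∃ F : ℝ × ℝ → ℝ × ℝ, ContDiff ℝ k F ∧ IsLiftOf F T) ∧
  (∃ G : ℝ × ℝ → ℝ × ℝ, ContDiff ℝ k G ∧ IsLiftOf G (Function.invFun T))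

/-- `T` is weakly mixing w.r.t. the measure `μ`: `T × T` is ergodic for `μ × μ`. -/
def WeaklyMixing {X : Type*} [MeasurableSpace X] (T : X → X) (μ : Measure X) : Prop :=
  Ergodic (fun p : X × X => (T p.1, T p.2)) (μ.prod μ)

/-- `T` is uniquely ergodic with the Haar–Lebesgue measure `volume` as its unique
invariant Borel probability measure. -/
def UniquelyErgodicWithVolume (T : Torus2 → Torus2) : Prop :=
  MeasurePreserving T volume volume ∧
  ∀ μ : Measure Torus2, IsProbabilityMeasure μ → MeasurePreserving T μ μ → μ = volume

/-- `T` (preserving the Haar measure `volume` on `𝕋²`) is measure-theoretically isomorphic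
to the rotation of the circle `𝕋¹ = ℝ/ℤ` by some irrational number `α`. -/
def IsoToIrrationalRotation (T : Torus2 → Torus2) : Prop :=
  ∃ α : ℝ, Irrational α ∧
    ∃ (A : Set Torus2) (B : Set Torus1) (ψ : Torus2 → Torus1) (φ : Torus1 → Torus2),
      MeasurableSet A ∧ MeasurableSet B ∧
      volume Aᶜ = 0 ∧ volume Bᶜ = 0 ∧
      Set.MapsTo T A A ∧ Set.MapsTo (fun y : Torus1 => y + (α : Torus1)) B B ∧
      Measurable ψ ∧ Measurable φ ∧
      Set.MapsTo ψ A B ∧ Set.MapsTo φ B A ∧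
      (∀ x ∈ A, φ (ψ x) = x) ∧ (∀ y ∈ B, ψ (φ y) = y) ∧
      Measure.map ψ volume = volume ∧
      (∀ x ∈ A, ψ (T x) = ψ x + (α : Torus1))

/-- A finite measurable partition of `X`. -/
structure FinMeasPartition (X : Type*) [MeasurableSpace X] where
  card : ℕ
  piece : Fin card → Set X
  measurable : ∀ i, MeasurableSet (piece i)
  disjoint : Pairwise fun i j => Disjoint (piece i) (piece j)
  cover : (⋃ i, piece i) = Set.univ

open Classical in
/-- The normalized Hamming distance between the length-`n` `P`-codings of the `T`-orbits
of `x` and `y` (the codings differ at time `k` iff `T^k x` and `T^k y` lie in different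
pieces of `P`). -/
def codeHammingDist {X : Type*} [MeasurableSpace X] (T : X → X) (P : FinMeasPartition X)
    (n : ℕ) (x y : X) : ℝ :=
  (((Finset.range n).filter fun k =>
      ¬ ∃ i, T^[k] x ∈ P.piece i ∧ T^[k] y ∈ P.piece i).card : ℝ) / n

/-- `S^H_P(T,n,ε)`: the minimal number of `(ε,n)`-Hamming balls whose union has
`μ`-measure greater than `1 - ε`. -/
def hammingCoverNum {X : Type*} [MeasurableSpace X] (μ : Measure X) (T : X → X)
    (P : FinMeasPartition X) (n : ℕ) (ε : ℝ) : ℕ :=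
  sInf {N : ℕ | ∃ F : Finset X, F.card = N ∧
    ENNReal.ofReal (1 - ε) < μ (⋃ x ∈ F, {y | codeHammingDist T P n x y < ε})}

/-- For a fixed partition `P` and `ε > 0`: the supremum (with the `Real.sSup` convention,
`0` if the set is empty) of all `t > 0` with `limsup_n S^H_P(T,n,ε)/a_n(t) > 0`. -/
def measSlowEntFun {X : Type*} [MeasurableSpace X] (μ : Measure X) (T : X → X)
    (a : ℕ → ℝ → ℝ) (P : FinMeasPartition X) (ε : ℝ) : ℝ :=
  sSup {t : ℝ | 0 < t ∧
    0 < Filter.atTop.limsup fun n =>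
      (hammingCoverNum μ T P n ε : ℝ≥0∞) / ENNReal.ofReal (a n t)}

/-- The upper measure-theoretic slow entropy of `(T,μ)` w.r.t. the scaling family `a`
equals `E`: for every finite measurable partition the limit as `ε → 0⁺` exists, and the
least upper bound over all partitions of these limits is `E`. -/
def HasUpperMeasSlowEntropy {X : Type*} [MeasurableSpace X] (μ : Measure X) (T : X → X)
    (a : ℕ → ℝ → ℝ) (E : ℝ) : Prop :=
  (∀ P : FinMeasPartition X, ∃ e : ℝ,
      Filter.Tendsto (measSlowEntFun μ T a P) (𝓝[>] (0 : ℝ)) (𝓝 e)) ∧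
  IsLUB {e : ℝ | ∃ P : FinMeasPartition X,
      Filter.Tendsto (measSlowEntFun μ T a P) (𝓝[>] (0 : ℝ)) (𝓝 e)} E

/-- `Γ_r(x) = (Γ(x^{1/r} + 1))^r`, where `Γ` is the Euler Gamma function. -/
def GammaR (r : ℕ) (x : ℝ) : ℝ := (Real.Gamma (x ^ ((r : ℝ)⁻¹) + 1)) ^ r

/-- The inverse of `Γ_r` on `[1,∞)` (where `Γ_r` is strictly increasing with `Γ_r 1 = 1`). -/
def GammaRInv (r : ℕ) (y : ℝ) : ℝ := sSup {x : ℝ | 1 ≤ x ∧ GammaR r x ≤ y}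

/-- The intermediate scaling family `a^{int1,r}_m(t) = m^(t / Γ_r⁻¹(ln m / ln q₁))`. -/
def intScale1 (r q₁ : ℕ) (m : ℕ) (t : ℝ) : ℝ :=
  (m : ℝ) ^ (t / GammaRInv r (Real.log m / Real.log q₁))

/-- The intermediate scaling family
`a^{int2,r}_m(t) = m^(t / (Γ_r⁻¹(ln m / ln q₁))^((r-2)/r))`. -/
def intScale2 (r q₁ : ℕ) (m : ℕ) (t : ℝ) : ℝ :=
  (m : ℝ) ^ (t / GammaRInv r (Real.log m / Real.log q₁) ^ (((r : ℝ) - 2) / (r : ℝ)))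

/-- The logarithmic scaling family `a^{ln}_m(t) = (ln m)^t`. -/
def logScale (m : ℕ) (t : ℝ) : ℝ := Real.log m ^ t

/-- The polynomial scaling family `a^{pol}_m(t) = m^t`. -/
def polScale (m : ℕ) (t : ℝ) : ℝ := (m : ℝ) ^ t

end



/-! ### Lifts of torus maps -/

/-- `F` commutes with integer translations. -/
def IntPer (F : ℝ × ℝ → ℝ × ℝ) : Prop :=
  ∀ (p : ℝ × ℝ) (a b : ℤ), F (p + ((a : ℝ), (b : ℝ))) = F p + ((a : ℝ), (b : ℝ))

/-- A section of the projection. -/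
noncomputable def tsec (z : Torus2) : ℝ × ℝ := (Quotient.out z.1, Quotient.out z.2)

lemma torusProj_tsec (z : Torus2) : torusProj (tsec z) = z := by
  rcases z with ⟨x, y⟩
  exact Prod.ext (Quotient.out_eq x) (Quotient.out_eq y)

lemma coe_int_circle (a : ℤ) : (((a : ℤ) : ℝ) : Torus1) = 0 := by
  rw [AddCircle.coe_eq_zero_iff]
  exact ⟨a, by simp⟩

lemma circle_eq_iff {x y : ℝ} : (x : Torus1) = (y : Torus1) ↔ ∃ a : ℤ, y = x + a := by
  constructor
  · intro h
    have : ((y - x : ℝ) : Torus1) = 0 := by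
      rw [AddCircle.coe_sub, h, sub_self]
    rw [AddCircle.coe_eq_zero_iff] at this
    obtain ⟨n, hn⟩ := this
    refine ⟨n, ?_⟩
    simp at hn
    linarith
  · rintro ⟨a, rfl⟩
    rw [AddCircle.coe_add, coe_int_circle, add_zero]

lemma torusProj_eq_iff {p p' : ℝ × ℝ} :
    torusProj p = torusProj p' ↔ ∃ a b : ℤ, p' = p + ((a : ℝ), (b : ℝ)) := by
  constructor
  · intro h
    have h1 := congrArg Prod.fst h
    have h2 := congrArg Prod.snd h
    simp only [torusProj] at h1 h2
    obtain ⟨a, ha⟩ := circle_eq_iff.1 h1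
    obtain ⟨b, hb⟩ := circle_eq_iff.1 h2
    exact ⟨a, b, Prod.ext ha hb⟩
  · rintro ⟨a, b, rfl⟩
    exact Prod.ext (circle_eq_iff.2 ⟨a, rfl⟩) (circle_eq_iff.2 ⟨b, rfl⟩)

/-- The torus map with lift `F`. -/
noncomputable def desc (F : ℝ × ℝ → ℝ × ℝ) : Torus2 → Torus2 := fun z => torusProj (F (tsec z))

lemma desc_proj {F : ℝ × ℝ → ℝ × ℝ} (hF : IntPer F) (p : ℝ × ℝ) :
    desc F (torusProj p) = torusProj (F p) := by
  unfold desc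
  obtain ⟨a, b, h⟩ := torusProj_eq_iff.1 (torusProj_tsec (torusProj p)).symm
  rw [h, hF]
  exact (torusProj_eq_iff.2 ⟨a, b, rfl⟩).symm

lemma torusProj_surj : Function.Surjective torusProj := fun z => ⟨tsec z, torusProj_tsec z⟩

lemma IntPer.comp {F G : ℝ × ℝ → ℝ × ℝ} (hF : IntPer F) (hG : IntPer G) : IntPer (F ∘ G) := by
  intro p a b
  simp [hG p a b, hF (G p) a b]

lemma desc_comp {F G : ℝ × ℝ → ℝ × ℝ} (hF : IntPer F) (hG : IntPer G) :
    desc (F ∘ G) = desc F ∘ desc G := by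
  funext z
  obtain ⟨p, rfl⟩ := torusProj_surj z
  simp [desc_proj (hF.comp hG), desc_proj hF, desc_proj hG]

lemma desc_id : desc (id : ℝ × ℝ → ℝ × ℝ) = id := by
  funext z
  simp [desc, torusProj_tsec]

lemma torusProj_quot : IsOpenQuotientMap torusProj :=
  (QuotientAddGroup.isOpenQuotientMap_mk (G := ℝ) (N := AddSubgroup.zmultiples (1 : ℝ))).prodMap
    (QuotientAddGroup.isOpenQuotientMap_mk (G := ℝ) (N := AddSubgroup.zmultiples (1 : ℝ)))

lemma torusProj_cont : Continuous torusProj := torusProj_quot.continuous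

lemma desc_cont {F : ℝ × ℝ → ℝ × ℝ} (hF : IntPer F) (hc : Continuous F) : Continuous (desc F) := by
  rw [← torusProj_quot.continuous_comp_iff]
  have : desc F ∘ torusProj = torusProj ∘ F := by
    funext p; exact desc_proj hF p
  rw [this]
  exact torusProj_cont.comp hc

/-! ### the pseudo-distance -/

/-- Torus distance of the projections. -/
noncomputable def DD (p p' : ℝ × ℝ) : ℝ := dist (torusProj p) (torusProj p')

lemma circle_norm_le (x : ℝ) : ‖(x : Torus1)‖ ≤ |x| := by
  have h := UnitAddCircle.norm_eq (x := x)
  rw [h]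
  have := round_le x 0
  simpa using this

lemma circle_rep (x : ℝ) : ∃ a : ℤ, |x - a| = ‖(x : Torus1)‖ :=
  ⟨round x, (UnitAddCircle.norm_eq (x := x)).symm⟩

lemma DD_eq (p p' : ℝ × ℝ) :
    DD p p' = max ‖((p.1 - p'.1 : ℝ) : Torus1)‖ ‖((p.2 - p'.2 : ℝ) : Torus1)‖ := by
  unfold DD
  rw [Prod.dist_eq, dist_eq_norm, dist_eq_norm]
  rfl

lemma R2norm_le_iff {p : ℝ × ℝ} {c : ℝ} : ‖p‖ ≤ c ↔ |p.1| ≤ c ∧ |p.2| ≤ c := by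
  rw [Prod.norm_def]; simp

lemma DD_le (p p' : ℝ × ℝ) : DD p p' ≤ ‖p - p'‖ := by
  rw [DD_eq, Prod.norm_def]
  exact max_le_max (circle_norm_le _) (circle_norm_le _)

lemma DD_rep (p p' : ℝ × ℝ) : ∃ a b : ℤ, ‖p - (p' + ((a : ℝ), (b : ℝ)))‖ = DD p p' := by
  obtain ⟨a, ha⟩ := circle_rep (p.1 - p'.1)
  obtain ⟨b, hb⟩ := circle_rep (p.2 - p'.2)
  refine ⟨a, b, ?_⟩
  rw [DD_eq, Prod.norm_def, ← ha, ← hb]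
  simp [sub_sub]

lemma DD_nonneg (p p' : ℝ × ℝ) : 0 ≤ DD p p' := dist_nonneg

lemma DD_tri (p q r : ℝ × ℝ) : DD p r ≤ DD p q + DD q r := dist_triangle _ _ _

lemma DD_comm (p q : ℝ × ℝ) : DD p q = DD q p := dist_comm _ _

/-- perturbation of the pseudo-distance -/
lemma DD_pert (p p' q q' : ℝ × ℝ) : DD p p' ≤ DD q q' + ‖p - q‖ + ‖p' - q'‖ := by
  have h1 := DD_tri p q p'
  have h2 := DD_tri q q' p'
  have h3 := DD_le p q
  have h4 := DD_le q' p'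
  rw [norm_sub_rev] at h4
  linarith

/-- Integer translates do not matter. -/
lemma DD_int (p p' : ℝ × ℝ) (a b : ℤ) : DD p (p' + ((a : ℝ), (b : ℝ))) = DD p p' := by
  unfold DD
  rw [← torusProj_eq_iff.2 ⟨a, b, rfl⟩]

lemma DD_lip {F : ℝ × ℝ → ℝ × ℝ} (hF : IntPer F) {L : ℝ}
    (hL : ∀ p p', ‖F p - F p'‖ ≤ L * ‖p - p'‖) (p p' : ℝ × ℝ) : DD (F p) (F p') ≤ L * DD p p' := by
  obtain ⟨a, b, h⟩ := DD_rep p p'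
  rw [← h, ← DD_int (F p) (F p') a b, ← hF]
  exact (DD_le _ _).trans (hL _ _)

/-- A Lipschitz bound for smooth lifts. -/
lemma exists_lip {F : ℝ × ℝ → ℝ × ℝ} (hF : IntPer F) (hc : ContDiff ℝ 1 F) :
    ∃ L : ℝ, 1 ≤ L ∧ ∀ p p', ‖F p - F p'‖ ≤ L * ‖p - p'‖ := by
  have hcont : Continuous fun p => ‖fderiv ℝ F p‖ :=
    (hc.continuous_fderiv (by norm_num)).norm
  obtain ⟨C, hC⟩ := (isCompact_Icc (a := (0 : ℝ × ℝ)) (b := (1, 1))).exists_bound_of_continuousOn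
    hcont.continuousOn
  have hper : ∀ p (a b : ℤ), fderiv ℝ F (p + ((a : ℝ), (b : ℝ))) = fderiv ℝ F p := by
    intro p a b
    rw [← fderiv_comp_add_right]
    have : (fun x => F (x + ((a : ℝ), (b : ℝ)))) = fun x => F x + ((a : ℝ), (b : ℝ)) := by
      funext x; exact hF x a b
    rw [this, fderiv_add_const]
  have hall : ∀ p, ‖fderiv ℝ F p‖ ≤ max C 1 := by
    intro p
    have h1 := hper (Int.fract p.1, Int.fract p.2) ⌊p.1⌋ ⌊p.2⌋
    have h2 : ((Int.fract p.1, Int.fract p.2) : ℝ × ℝ) + (((⌊p.1⌋ : ℤ) : ℝ), ((⌊p.2⌋ : ℤ) : ℝ)) = p := by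
      ext <;> simp
    rw [h2] at h1
    rw [h1]
    have := hC (Int.fract p.1, Int.fract p.2) ⟨⟨Int.fract_nonneg _, Int.fract_nonneg _⟩,
      ⟨(Int.fract_lt_one _).le, (Int.fract_lt_one _).le⟩⟩
    simp at this
    exact this.trans (le_max_left _ _)
  refine ⟨max C 1, le_max_right _ _, fun p p' => ?_⟩
  exact (convex_univ).norm_image_sub_le_of_norm_fderiv_le
    (fun x _ => (hc.differentiable (by norm_num)).differentiableAt)
    (fun x _ => hall x) (mem_univ p') (mem_univ p)

/-! ### bundled smooth area preserving torus diffeos -/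

/-- A smooth area preserving torus diffeomorphism, given by lifts. -/
structure Dif where
  F : ℝ × ℝ → ℝ × ℝ
  G : ℝ × ℝ → ℝ × ℝ
  cF : ContDiff ℝ (⊤ : ℕ∞) F
  cG : ContDiff ℝ (⊤ : ℕ∞) G
  FG : ∀ p, F (G p) = p
  GF : ∀ p, G (F p) = p
  pF : IntPer F
  mF : MeasurePreserving (desc F) volume volume
  mG : MeasurePreserving (desc G) volume volume

lemma Dif.pG (h : Dif) : IntPer h.G := by
  intro p a b
  have := h.pF (h.G p) a b
  rw [h.FG] at this
  rw [← this, h.GF]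

/-- composition -/
def Dif.comp (h k : Dif) : Dif where
  F := h.F ∘ k.F
  G := k.G ∘ h.G
  cF := h.cF.comp k.cF
  cG := k.cG.comp h.cG
  FG := fun p => by simp [k.FG, h.FG]
  GF := fun p => by simp [k.GF, h.GF]
  pF := h.pF.comp k.pF
  mF := by rw [desc_comp h.pF k.pF]; exact h.mF.comp k.mF
  mG := by rw [desc_comp k.pG h.pG]; exact k.mG.comp h.mG

/-- identity -/
def Dif.idd : Dif where
  F := id
  G := id
  cF := contDiff_id
  cG := contDiff_id
  FG := fun p => rfl
  GF := fun p => rfl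
  pF := fun p a b => rfl
  mF := by rw [desc_id]; exact MeasurePreserving.id _
  mG := by rw [desc_id]; exact MeasurePreserving.id _

lemma per_int {f : ℝ → ℝ} (hf : Function.Periodic f 1) (x : ℝ) (a : ℤ) : f (x + a) = f x := by
  have := hf.int_mul a x
  simpa using this

/-- vertical shear on lifts -/
def ysh (f : ℝ → ℝ) (p : ℝ × ℝ) : ℝ × ℝ := (p.1, p.2 + f p.1)
/-- horizontal shear on lifts -/
def xsh (f : ℝ → ℝ) (p : ℝ × ℝ) : ℝ × ℝ := (p.1 + f p.2, p.2)

lemma ysh_per {f : ℝ → ℝ} (hf : Function.Periodic f 1) : IntPer (ysh f) := by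
  intro p a b
  ext
  · simp [ysh]
  · simp [ysh, per_int hf]; ring

lemma xsh_per {f : ℝ → ℝ} (hf : Function.Periodic f 1) : IntPer (xsh f) := by
  intro p a b
  ext
  · simp [xsh, per_int hf]; ring
  · simp [xsh]

lemma ysh_cd {f : ℝ → ℝ} (hc : ContDiff ℝ (⊤ : ℕ∞) f) : ContDiff ℝ (⊤ : ℕ∞) (ysh f) := by
  unfold ysh; fun_prop
lemma xsh_cd {f : ℝ → ℝ} (hc : ContDiff ℝ (⊤ : ℕ∞) f) : ContDiff ℝ (⊤ : ℕ∞) (xsh f) := by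
  unfold xsh; fun_prop

lemma ysh_mp {f : ℝ → ℝ} (hf : Function.Periodic f 1) (hc : Continuous f) :
    MeasurePreserving (desc (ysh f)) volume volume := by
  have hcont : Continuous (desc (ysh f)) := desc_cont (ysh_per hf) (by unfold ysh; fun_prop)
  have heq : desc (ysh f) = fun z : Torus1 × Torus1 =>
      (id z.1, (fun (x : Torus1) (y : Torus1) => y + ((f (Quotient.out x) : ℝ) : Torus1)) z.1 z.2) := by
    funext z
    have := torusProj_tsec z
    simp only [desc, ysh, torusProj, tsec, id, AddCircle.coe_add]
    simp only [torusProj, tsec] at this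
    have h1 := congrArg Prod.fst this
    have h2 := congrArg Prod.snd this
    simp only at h1 h2
    rw [h1, h2]
  have hm : Measurable (Function.uncurry
      (fun (x : Torus1) (y : Torus1) => y + ((f (Quotient.out x) : ℝ) : Torus1))) := by
    have := hcont.measurable.snd
    rw [heq] at this
    exact this
  rw [heq]
  exact (MeasurePreserving.id _).skew_product hm
    (Eventually.of_forall fun a => map_add_right_eq_self volume _)

lemma xsh_mp {f : ℝ → ℝ} (hf : Function.Periodic f 1) (hc : Continuous f) :
    MeasurePreserving (desc (xsh f)) volume volume := by
  have h1 := ysh_mp hf hc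
  have hsw : MeasurePreserving (Prod.swap : Torus1 × Torus1 → Torus1 × Torus1) volume volume :=
    Measure.measurePreserving_swap
  have heq : desc (xsh f) = Prod.swap ∘ desc (ysh f) ∘ Prod.swap := by
    funext z
    obtain ⟨p, rfl⟩ := torusProj_surj z
    have : Prod.swap (torusProj p) = torusProj p.swap := rfl
    simp only [Function.comp, this]
    rw [desc_proj (xsh_per hf), desc_proj (ysh_per hf)]
    rfl
  rw [heq]
  exact hsw.comp (h1.comp hsw)

lemma per_neg {f : ℝ → ℝ} (hf : Function.Periodic f 1) : Function.Periodic (fun x => - f x) 1 :=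
  fun x => by simp [hf x]

/-- vertical shear -/
def Dif.Y (f : ℝ → ℝ) (hf : Function.Periodic f 1) (hc : ContDiff ℝ (⊤ : ℕ∞) f) : Dif where
  F := ysh f
  G := ysh (fun x => - f x)
  cF := ysh_cd hc
  cG := ysh_cd hc.neg
  FG := fun p => by simp [ysh]
  GF := fun p => by simp [ysh]
  pF := ysh_per hf
  mF := ysh_mp hf hc.continuous
  mG := ysh_mp (per_neg hf) hc.continuous.neg

/-- horizontal shear -/
def Dif.X (f : ℝ → ℝ) (hf : Function.Periodic f 1) (hc : ContDiff ℝ (⊤ : ℕ∞) f) : Dif where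
  F := xsh f
  G := xsh (fun x => - f x)
  cF := xsh_cd hc
  cG := xsh_cd hc.neg
  FG := fun p => by simp [xsh]
  GF := fun p => by simp [xsh]
  pF := xsh_per hf
  mF := xsh_mp hf hc.continuous
  mG := xsh_mp (per_neg hf) hc.continuous.neg

/-- rotation conjugated by `h` -/
def cj (h : Dif) (α : ℝ) (p : ℝ × ℝ) : ℝ × ℝ := h.F (h.G p + (α, 0))

lemma cj_per (h : Dif) (α : ℝ) : IntPer (cj h α) := by
  intro p a b
  unfold cj
  rw [h.pG, add_right_comm, h.pF]

lemma cj_cj (h : Dif) (α β : ℝ) (p : ℝ × ℝ) : cj h α (cj h β p) = cj h (α + β) p := by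
  unfold cj
  rw [h.GF, add_assoc]
  congr 2
  simp [add_comm]

lemma cj_zero (h : Dif) (p : ℝ × ℝ) : cj h 0 p = p := by
  unfold cj
  have : ((0 : ℝ), (0 : ℝ)) = 0 := rfl
  rw [this, add_zero, h.FG]

lemma cj_iter (h : Dif) (α : ℝ) (i : ℕ) (p : ℝ × ℝ) : (cj h α)^[i] p = cj h (i * α) p := by
  induction i with
  | zero => simp [cj_zero]
  | succ n ih =>
    rw [Function.iterate_succ_apply', ih, cj_cj]
    congr 1
    push_cast
    ring

lemma cj_cd (h : Dif) (α : ℝ) : ContDiff ℝ (⊤ : ℕ∞) (cj h α) := by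
  unfold cj
  exact h.cF.comp (h.cG.add contDiff_const)

lemma trans_mp (α : ℝ) : MeasurePreserving (desc (fun p => p + (α, 0))) volume volume := by
  have := xsh_mp (f := fun _ => α) (fun x => rfl) continuous_const
  have h : xsh (fun _ => α) = fun p : ℝ × ℝ => p + (α, 0) := by
    funext p; ext <;> simp [xsh]
  rwa [h] at this

lemma cj_mp (h : Dif) (α : ℝ) : MeasurePreserving (desc (cj h α)) volume volume := by
  have hp : IntPer (fun p : ℝ × ℝ => p + (α, 0)) := fun p a b => add_right_comm _ _ _
  have : cj h α = h.F ∘ ((fun p : ℝ × ℝ => p + (α, 0)) ∘ h.G) := rfl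
  rw [this, desc_comp h.pF (hp.comp h.pG), desc_comp hp h.pG]
  exact h.mF.comp ((trans_mp α).comp h.mG)


/-! ### sawtooth -/

lemma exists_saw (η : ℝ) (h0 : 0 < η) (h1 : η < 1 / 2) :
    ∃ b : ℝ → ℝ, Function.Periodic b 1 ∧ ContDiff ℝ (⊤ : ℕ∞) b ∧ (∀ x, |b x| ≤ 1) ∧
      ∀ x, η ≤ x → x ≤ 1 - η → b x = x := by
  let χ : ContDiffBump (1 / 2 : ℝ) := ⟨1 / 2 - η, 1 / 2 - η / 2, by linarith, by linarith⟩
  have hz : ∀ x : ℝ, 1 / 2 - η / 2 ≤ |x - 1 / 2| → χ x = 0 := by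
    intro x hx
    exact χ.zero_of_le_dist (by rw [Real.dist_eq]; exact hx)
  have hone : ∀ x : ℝ, η ≤ x → x ≤ 1 - η → χ x = 1 := by
    intro x hx hx'
    apply χ.one_of_mem_closedBall
    rw [Metric.mem_closedBall, Real.dist_eq, abs_le]
    change -(1 / 2 - η) ≤ _ ∧ _ ≤ 1 / 2 - η
    constructor <;> linarith
  refine ⟨fun x => Int.fract x * χ (Int.fract x), ?_, ?_, ?_, ?_⟩
  · intro x; simp [Int.fract_add_one]
  · rw [contDiff_iff_contDiffAt]
    intro x
    by_cases hx : Int.fract x = 0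
    · have hx' : x = ⌊x⌋ := by have := Int.self_sub_floor x; linarith
      have : (fun x => Int.fract x * χ (Int.fract x)) =ᶠ[𝓝 x] fun _ => 0 := by
        have hn : Ioo (x - η / 2) (x + η / 2) ∈ 𝓝 x := Ioo_mem_nhds (by linarith) (by linarith)
        filter_upwards [hn] with y hy
        rw [hz, mul_zero]
        rcases lt_or_ge y x with hyx | hyx
        · have : ⌊y⌋ = ⌊x⌋ - 1 := by
            rw [Int.floor_eq_iff]
            push_cast
            constructor <;> linarith [hy.1]
          have : Int.fract y = y - x + 1 := by
            rw [← Int.self_sub_floor, this]; push_cast; linarith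
          rw [this, le_abs]
          left; linarith [hy.1]
        · have : ⌊y⌋ = ⌊x⌋ := by
            rw [Int.floor_eq_iff]
            constructor <;> linarith [hy.2]
          have : Int.fract y = y - x := by
            rw [← Int.self_sub_floor, this]; linarith
          rw [this, le_abs]
          right; linarith [hy.2]
      exact contDiffAt_const.congr_of_eventuallyEq this
    · have hpos : 0 < Int.fract x := lt_of_le_of_ne (Int.fract_nonneg x) (Ne.symm hx)
      have : (fun x => Int.fract x * χ (Int.fract x)) =ᶠ[𝓝 x]
          fun y => (y - ⌊x⌋) * χ (y - ⌊x⌋) := by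
        have hn : Ioo (⌊x⌋ : ℝ) (⌊x⌋ + 1) ∈ 𝓝 x := by
          apply Ioo_mem_nhds
          · have := Int.self_sub_floor x; linarith
          · exact Int.lt_floor_add_one x
        filter_upwards [hn] with y hy
        have : ⌊y⌋ = ⌊x⌋ := by
          rw [Int.floor_eq_iff]
          exact ⟨hy.1.le, hy.2⟩
        rw [← Int.self_sub_floor, this]
      refine ContDiffAt.congr_of_eventuallyEq ?_ this
      have hs : ContDiffAt ℝ (⊤ : ℕ∞) (fun y : ℝ => y - ⌊x⌋) x := by fun_prop
      exact hs.mul ((χ.contDiff.contDiffAt).comp x hs)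
  · intro x
    rw [abs_mul]
    have h1 : |Int.fract x| ≤ 1 := by
      rw [abs_of_nonneg (Int.fract_nonneg x)]; exact (Int.fract_lt_one x).le
    have h2 : |χ (Int.fract x)| ≤ 1 := by
      rw [abs_of_nonneg χ.nonneg]; exact χ.le_one
    nlinarith [abs_nonneg (Int.fract x), abs_nonneg (χ (Int.fract x))]
  · intro x hx hx'
    have : Int.fract x = x := by
      rw [Int.fract_eq_self]; constructor <;> linarith
    simp only [this, hone x hx hx', mul_one]

/-! ### soft closeness in `C^r` -/

lemma soft_close {E : Type*} [NormedAddCommGroup E] [NormedSpace ℝ E]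
    (G : E × (ℝ × ℝ) → ℝ × ℝ) (hG : ContDiff ℝ (⊤ : ℕ∞) G)
    (hper : ∀ τ, IntPer (fun p => G (τ, p))) (r : ℕ) (ε : ℝ) (hε : 0 < ε) :
    ∀ᶠ τ in 𝓝 (0 : E), ∀ k ≤ r, ∀ p,
      ‖iteratedFDeriv ℝ k (fun p => G (τ, p) - G (0, p)) p‖ ≤ ε := by
  set W : E × (ℝ × ℝ) → ℝ × ℝ := fun z => G z - G (0, z.2) with hW
  have hWs : ContDiff ℝ (⊤ : ℕ∞) W := by
    apply hG.sub
    exact hG.comp (contDiff_const.prodMk contDiff_snd)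
  have hform : ∀ (k : ℕ) (τ : E) (p : ℝ × ℝ), iteratedFDeriv ℝ k (fun p => G (τ, p) - G (0, p)) p =
      (iteratedFDeriv ℝ k W (τ, p)).compContinuousLinearMap
        (fun _ => ContinuousLinearMap.inr ℝ E (ℝ × ℝ)) := by
    intro k τ p
    have h1 : (fun p => G (τ, p) - G (0, p)) =
        (fun z => W ((τ, 0) + z)) ∘ (ContinuousLinearMap.inr ℝ E (ℝ × ℝ)) := by
      funext p
      simp [hW]
    have h2 : ContDiff ℝ (⊤ : ℕ∞) (fun z => W ((τ, 0) + z)) :=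
      hWs.comp (contDiff_const.add contDiff_id)
    rw [h1, ContinuousLinearMap.iteratedFDeriv_comp_right _ h2 _ (by exact_mod_cast le_top),
      iteratedFDeriv_comp_add_left]
    simp
  have hone : ∀ k : ℕ, ∀ᶠ τ in 𝓝 (0 : E), ∀ p,
      ‖iteratedFDeriv ℝ k (fun p => G (τ, p) - G (0, p)) p‖ ≤ ε := by
    intro k
    have hcont : Continuous fun z : E × (ℝ × ℝ) =>
        ‖(iteratedFDeriv ℝ k W z).compContinuousLinearMap
          (fun _ => ContinuousLinearMap.inr ℝ E (ℝ × ℝ))‖ := by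
      have h1 : Continuous (iteratedFDeriv ℝ k W) :=
        hWs.continuous_iteratedFDeriv (by exact_mod_cast le_top)
      exact ((ContinuousMultilinearMap.compContinuousLinearMapL
        (fun _ => ContinuousLinearMap.inr ℝ E (ℝ × ℝ))).continuous.comp h1).norm
    have hzero : ∀ p, ‖(iteratedFDeriv ℝ k W (0, p)).compContinuousLinearMap
          (fun _ => ContinuousLinearMap.inr ℝ E (ℝ × ℝ))‖ < ε := by
      intro p
      rw [← hform]
      simp only [sub_self]
      have h0 : iteratedFDeriv ℝ k (fun _ : ℝ × ℝ => (0 : ℝ × ℝ)) p = 0 := by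
        have := iteratedFDeriv_zero_fun (𝕜 := ℝ) (E := ℝ × ℝ) (F := ℝ × ℝ) (n := k)
        exact congrFun this p
      rw [h0, norm_zero]
      exact hε
    have hK : IsCompact (Icc (0 : ℝ × ℝ) (1, 1)) := isCompact_Icc
    have := hK.eventually_forall_of_forall_eventually (x₀ := (0 : E))
      (P := fun τ p => ‖(iteratedFDeriv ℝ k W (τ, p)).compContinuousLinearMap
          (fun _ => ContinuousLinearMap.inr ℝ E (ℝ × ℝ))‖ < ε)
      (fun p _ => hcont.continuousAt.eventually_lt continuousAt_const (hzero p))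
    filter_upwards [this] with τ hτ p
    have hpp : ∀ (q : ℝ × ℝ) (a b : ℤ),
        iteratedFDeriv ℝ k (fun p => G (τ, p) - G (0, p)) (q + ((a : ℝ), (b : ℝ))) =
        iteratedFDeriv ℝ k (fun p => G (τ, p) - G (0, p)) q := by
      intro q a b
      rw [← iteratedFDeriv_comp_add_right]
      congr 1
      funext x
      have h1 := hper τ x a b
      have h2 := hper 0 x a b
      simp only at h1 h2
      rw [h1, h2]
      simp
    have h2 : ((Int.fract p.1, Int.fract p.2) : ℝ × ℝ) + (((⌊p.1⌋ : ℤ) : ℝ), ((⌊p.2⌋ : ℤ) : ℝ)) = p := by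
      ext <;> simp
    rw [← h2, hpp, hform]
    exact (hτ _ ⟨⟨Int.fract_nonneg _, Int.fract_nonneg _⟩,
      ⟨(Int.fract_lt_one _).le, (Int.fract_lt_one _).le⟩⟩).le
  have := (Finset.range (r + 1)).eventually_all.2 (fun k _ => hone k)
  filter_upwards [this] with τ hτ k hk
  exact hτ k (Finset.mem_range.2 (by omega))


/-! ### building blocks of one step -/

/-- `h` commutes with the horizontal translation by `β`. -/
def Com (h : Dif) (β : ℝ) : Prop := ∀ p, h.F (p + (β, 0)) = h.F p + (β, 0)

lemma Com.G {h : Dif} {β : ℝ} (hc : Com h β) (p : ℝ × ℝ) : h.G (p + (β, 0)) = h.G p + (β, 0) := by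
  have := hc (h.G p)
  rw [h.FG] at this
  rw [← this, h.GF]

lemma Com.comp {h k : Dif} {β : ℝ} (hh : Com h β) (hk : Com k β) : Com (h.comp k) β := by
  intro p
  simp only [Dif.comp, Function.comp]
  rw [hk, hh]

lemma cj_comp_of_com {h g : Dif} {β : ℝ} (hc : Com g β) (p : ℝ × ℝ) :
    cj (h.comp g) β p = cj h β p := by
  simp only [cj, Dif.comp, Function.comp]
  rw [hc, g.FG]

lemma cj_comp_add {k S : Dif} {β δ : ℝ} (hc : Com S β) (p : ℝ × ℝ) :
    cj (k.comp S) (β + δ) p = k.F (cj S δ (k.G p) + (β, 0)) := by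
  simp only [cj, Dif.comp, Function.comp]
  rw [← hc, add_assoc]
  congr 3
  ext <;> simp [add_comm]

/-- the sinusoid -/
noncomputable def sn (s : ℝ) (M : ℕ) (x : ℝ) : ℝ := s * Real.sin (2 * Real.pi * (M * x))

lemma sn_add (s : ℝ) {M : ℕ} {β : ℝ} {c : ℤ} (hβ : M * β = c) (x : ℝ) :
    sn s M (x + β) = sn s M x := by
  unfold sn
  rw [mul_add, hβ, mul_add]
  congr 1
  have := Real.sin_add_int_mul_two_pi (2 * Real.pi * (M * x)) c
  rw [← this]
  congr 1
  ring

lemma sn_per (s : ℝ) (M : ℕ) : Function.Periodic (sn s M) 1 :=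
  fun x => sn_add s (c := M) (by simp) x

lemma sn_cd (s : ℝ) (M : ℕ) : ContDiff ℝ (⊤ : ℕ∞) (sn s M) := by
  unfold sn
  exact contDiff_const.mul (Real.contDiff_sin.comp (by fun_prop))

lemma sn_lip {s : ℝ} (hs : 0 ≤ s) (M : ℕ) (x y : ℝ) :
    |sn s M x - sn s M y| ≤ 2 * Real.pi * M * s * |x - y| := by
  unfold sn
  rw [← mul_sub, abs_mul, abs_of_nonneg hs]
  have h1 := Real.abs_sin_sub_sin_le (2 * Real.pi * (M * x)) (2 * Real.pi * (M * y))
  have h2 : |2 * Real.pi * (M * x) - 2 * Real.pi * (M * y)| = 2 * Real.pi * M * |x - y| := by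
    rw [← mul_sub, ← mul_sub, abs_mul, abs_of_pos Real.two_pi_pos, abs_mul, Nat.abs_cast]; ring
  rw [h2] at h1
  calc _ ≤ s * (2 * Real.pi * M * |x - y|) := mul_le_mul_of_nonneg_left h1 hs
    _ = _ := by ring

/-- the entropy shear -/
noncomputable def SS (s : ℝ) (M : ℕ) : Dif := Dif.Y (sn s M) (sn_per s M) (sn_cd s M)

lemma SS_F (s : ℝ) (M : ℕ) (p : ℝ × ℝ) : (SS s M).F p = (p.1, p.2 + sn s M p.1) := rfl
lemma SS_G (s : ℝ) (M : ℕ) (p : ℝ × ℝ) : (SS s M).G p = (p.1, p.2 + -sn s M p.1) := rfl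

lemma SS_com (s : ℝ) {M : ℕ} {β : ℝ} {c : ℤ} (hβ : M * β = c) : Com (SS s M) β := by
  intro p
  rw [SS_F, SS_F]
  ext
  · simp
  · simp [sn_add s hβ]

lemma cj_SS (s : ℝ) (M : ℕ) (δ : ℝ) (p : ℝ × ℝ) :
    cj (SS s M) δ p = (p.1 + δ, p.2 + (sn s M (p.1 + δ) - sn s M p.1)) := by
  unfold cj
  rw [SS_G, SS_F]
  ext
  · simp
  · simp; ring

/-- the geometric map -/
noncomputable def gd (b : ℝ → ℝ) (hb : Function.Periodic b 1) (hc : ContDiff ℝ (⊤ : ℕ∞) b) (Q : ℕ) :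
    Dif :=
  (Dif.Y (fun x => - b (Q * x)) (fun x => by
      have := per_int hb (Q * x) (Q : ℤ)
      simp only [mul_add, mul_one]
      simp only [Int.cast_natCast] at this
      rw [this]) ((hc.comp (by fun_prop : ContDiff ℝ (⊤ : ℕ∞) fun x : ℝ => (Q : ℝ) * x)).neg)).comp
    (Dif.X (fun y => b y / Q) (fun x => by simp [hb x]) (hc.div_const _))

section gd
variable {b : ℝ → ℝ} {hb : Function.Periodic b 1} {hc : ContDiff ℝ (⊤ : ℕ∞) b} {Q : ℕ}

lemma gd_F (p : ℝ × ℝ) :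
    (gd b hb hc Q).F p = (p.1 + b p.2 / Q, p.2 - b (Q * (p.1 + b p.2 / Q))) := by
  rw [sub_eq_add_neg]; rfl

lemma gd_G (p : ℝ × ℝ) :
    (gd b hb hc Q).G p = (p.1 - b (p.2 + b (Q * p.1)) / Q, p.2 + b (Q * p.1)) := by
  simp [gd, Dif.comp, Dif.Y, Dif.X, ysh, xsh, sub_eq_add_neg]

lemma gd_com {β : ℝ} {c : ℤ} (hβ : Q * β = c) : Com (gd b hb hc Q) β := by
  intro p
  rw [gd_F, gd_F]
  have : (Q : ℝ) * (p.1 + β + b p.2 / Q) = Q * (p.1 + b p.2 / Q) + c := by rw [← hβ]; ring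
  ext
  · simp; ring
  · simp [this, per_int hb]

end gd

/-- perturbation family -/
noncomputable def WW (M : ℕ) (τ : ℝ × ℝ × ℝ) (w : ℝ × ℝ) : ℝ × ℝ :=
  (w.1 + τ.1, w.2 + (τ.2.1 * Real.sin (2 * Real.pi * (M * w.1)) +
    τ.2.2 * Real.cos (2 * Real.pi * (M * w.1))))

lemma WW_SS (s : ℝ) (M : ℕ) (δ : ℝ) (w : ℝ × ℝ) :
    cj (SS s M) δ w = WW M (δ, s * (Real.cos (2 * Real.pi * (M * δ)) - 1),
      s * Real.sin (2 * Real.pi * (M * δ))) w := by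
  rw [cj_SS, WW]
  ext
  · rfl
  · simp only [sn]
    rw [mul_add, mul_add, Real.sin_add]
    ring

lemma WW_per (M : ℕ) (τ : ℝ × ℝ × ℝ) : IntPer (WW M τ) := by
  intro p a b
  have h1 : Real.sin (2 * Real.pi * (M * (p.1 + a))) = Real.sin (2 * Real.pi * (M * p.1)) := by
    have := Real.sin_add_int_mul_two_pi (2 * Real.pi * (M * p.1)) (M * a)
    rw [← this]
    congr 1
    push_cast
    ring
  have h2 : Real.cos (2 * Real.pi * (M * (p.1 + a))) = Real.cos (2 * Real.pi * (M * p.1)) := by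
    have := Real.cos_add_int_mul_two_pi (2 * Real.pi * (M * p.1)) (M * a)
    rw [← this]
    congr 1
    push_cast
    ring
  ext
  · simp [WW]; ring
  · simp [WW, h1, h2]; ring

/-- Soft `C^r` closeness. -/
lemma close_Cr (k : Dif) (M : ℕ) (β : ℝ) (r : ℕ) (ε : ℝ) (hε : 0 < ε) :
    ∀ᶠ τ in 𝓝 (0 : ℝ × ℝ × ℝ), ∀ j ≤ r, ∀ p,
      ‖iteratedFDeriv ℝ j (fun p => k.F (WW M τ (k.G p) + (β, 0)) - cj k β p) p‖ ≤ ε := by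
  have h := soft_close (fun z : (ℝ × ℝ × ℝ) × (ℝ × ℝ) => k.F (WW M z.1 (k.G z.2) + (β, 0))) ?_ ?_ r ε hε
  · have h0 : ∀ w, WW M 0 w = w := by intro w; simp [WW]
    simp only [h0] at h
    exact h
  · apply k.cF.comp
    apply ContDiff.add _ contDiff_const
    have h1 : ContDiff ℝ (⊤ : ℕ∞) (fun z : (ℝ × ℝ × ℝ) × (ℝ × ℝ) => WW M z.1 z.2) := by
      unfold WW; fun_prop
    exact h1.comp (contDiff_fst.prodMk (k.cG.comp contDiff_snd))
  · intro τ p a b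
    simp only
    rw [k.pG, WW_per, add_right_comm, k.pF]

lemma SS_lip {s : ℝ} (hs : 0 ≤ s) (M : ℕ) (p p' : ℝ × ℝ) :
    ‖(SS s M).F p - (SS s M).F p'‖ ≤ (1 + 2 * Real.pi * M * s) * ‖p - p'‖ := by
  rw [SS_F, SS_F, R2norm_le_iff]
  have h1 : |p.1 - p'.1| ≤ ‖p - p'‖ := norm_fst_le (p - p')
  have h2 : |p.2 - p'.2| ≤ ‖p - p'‖ := norm_snd_le (p - p')
  have h3 := sn_lip hs M p.1 p'.1
  have h4 : 0 ≤ 2 * Real.pi * M * s := by positivity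
  have h5 : 2 * Real.pi * M * s * |p.1 - p'.1| ≤ 2 * Real.pi * M * s * ‖p - p'‖ :=
    mul_le_mul_of_nonneg_left h1 h4
  simp only [Prod.mk_sub_mk]
  constructor
  · nlinarith [norm_nonneg (p - p')]
  · have : p.2 + sn s M p.1 - (p'.2 + sn s M p'.1) = (p.2 - p'.2) + (sn s M p.1 - sn s M p'.1) := by
      ring
    rw [this]
    refine (abs_add_le _ _).trans ?_
    linarith

lemma comp_SS_lip {k : Dif} {L : ℝ} (hL : ∀ p p', ‖k.F p - k.F p'‖ ≤ L * ‖p - p'‖) (hL0 : 0 ≤ L)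
    {s : ℝ} (hs : 0 ≤ s) (M : ℕ) (p p' : ℝ × ℝ) :
    ‖(k.comp (SS s M)).F p - (k.comp (SS s M)).F p'‖ ≤ L * (1 + 2 * Real.pi * M * s) * ‖p - p'‖ := by
  refine (hL _ _).trans ?_
  rw [mul_assoc]
  exact mul_le_mul_of_nonneg_left (SS_lip hs M p p') hL0

lemma iter_close {k : Dif} {L : ℝ} (hL : ∀ p p', ‖k.F p - k.F p'‖ ≤ L * ‖p - p'‖) (hL0 : 0 ≤ L)
    {s : ℝ} (hs : 0 ≤ s) {M : ℕ} {β : ℝ} {c : ℤ} (hβ : M * β = c) (δ : ℝ) (p : ℝ × ℝ) :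
    ‖cj (k.comp (SS s M)) (β + δ) p - cj k β p‖ ≤ L * (1 + 2 * Real.pi * M * s) * |δ| := by
  rw [cj_comp_add (SS_com s hβ)]
  refine (hL _ _).trans ?_
  rw [mul_assoc]
  apply mul_le_mul_of_nonneg_left _ hL0
  rw [cj_SS, R2norm_le_iff]
  have h3 := sn_lip hs M ((k.G p).1 + δ) (k.G p).1
  have h4 : 0 ≤ 2 * Real.pi * M * s := by positivity
  have h5 := abs_nonneg δ
  simp only [add_sub_cancel_left] at h3
  constructor
  · simp; nlinarith
  · simp; nlinarith

/-- upper count -/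
lemma upper_count {k : Dif} {L : ℝ} (hL : ∀ p p', ‖k.F p - k.F p'‖ ≤ L * ‖p - p'‖) (hL0 : 1 ≤ L)
    {s : ℝ} (hs : 1 ≤ s) {M : ℕ} (hM : 0 < M) (ε : ℝ) (hε : 0 < ε) (hε1 : ε ≤ 1) :
    ∃ P : Finset (ℝ × ℝ), (P.card : ℝ) ≤ 512 * Real.pi * L ^ 2 * M * s / ε ^ 2 ∧
      ∀ p, ∃ p0 ∈ P, ∀ t, DD (cj (k.comp (SS s M)) t p) (cj (k.comp (SS s M)) t p0) < ε / 2 := by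
  set h' := k.comp (SS s M) with hh'
  have hpi := Real.pi_gt_three
  have hM1 : (1 : ℝ) ≤ M := by exact_mod_cast hM
  have hMs : 1 ≤ M * s := by nlinarith
  have hLMs : 1 ≤ L * (M * s) := by nlinarith
  have hpL : 1 ≤ Real.pi * (L * (M * s)) := by nlinarith
  set X1 : ℝ := 16 * (Real.pi * (L * (M * s))) / ε with hX1
  set X2 : ℝ := 8 * L / ε with hX2
  have hX1' : 1 ≤ X1 := by rw [hX1, le_div_iff₀ hε]; nlinarith
  have hX2' : 1 ≤ X2 := by rw [hX2, le_div_iff₀ hε]; nlinarith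
  set n1 := ⌈X1⌉₊ with hn1
  set n2 := ⌈X2⌉₊ with hn2
  have hn1a : X1 ≤ n1 := Nat.le_ceil _
  have hn2a : X2 ≤ n2 := Nat.le_ceil _
  have hn1b : (n1 : ℝ) ≤ 2 * X1 := by have := Nat.ceil_lt_add_one (by linarith : 0 ≤ X1); linarith
  have hn2b : (n2 : ℝ) ≤ 2 * X2 := by have := Nat.ceil_lt_add_one (by linarith : 0 ≤ X2); linarith
  have hn1p : (0 : ℝ) < n1 := by linarith
  have hn2p : (0 : ℝ) < n2 := by linarith
  refine ⟨((Finset.range n1) ×ˢ (Finset.range n2)).image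
    (fun ij => h'.F ((ij.1 : ℝ) / n1, (ij.2 : ℝ) / n2)), ?_, ?_⟩
  · have h1 : ((((Finset.range n1) ×ˢ (Finset.range n2)).image
      (fun ij => h'.F ((ij.1 : ℝ) / n1, (ij.2 : ℝ) / n2))).card : ℝ) ≤ n1 * n2 := by
      have := Finset.card_image_le (s := (Finset.range n1) ×ˢ (Finset.range n2))
        (f := fun ij => h'.F ((ij.1 : ℝ) / n1, (ij.2 : ℝ) / n2))
      rw [Finset.card_product, Finset.card_range, Finset.card_range] at this
      exact_mod_cast this
    refine h1.trans ?_
    calc (n1 : ℝ) * n2 ≤ (2 * X1) * (2 * X2) := mul_le_mul hn1b hn2b hn2p.le (by linarith)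
      _ = _ := by rw [hX1, hX2]; field_simp; ring
  · intro p
    set w := h'.G p with hw
    have hgrid : ∀ (n : ℕ) (x : ℝ), (0 : ℝ) < n → ∃ i ∈ Finset.range n, ∃ a : ℤ,
        |x - ((i : ℝ) / n + a)| ≤ 1 / n := by
      intro n x hn
      have hf0 := Int.fract_nonneg x
      have hf1 := Int.fract_lt_one x
      have hfl := Nat.floor_le (mul_nonneg hf0 hn.le)
      have hfl2 := Nat.lt_floor_add_one (Int.fract x * n)
      refine ⟨⌊Int.fract x * n⌋₊, ?_, ⌊x⌋, ?_⟩
      · rw [Finset.mem_range, Nat.floor_lt (mul_nonneg hf0 hn.le)]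
        nlinarith
      · have h1 : x - ((⌊Int.fract x * n⌋₊ : ℝ) / n + ⌊x⌋) =
            (Int.fract x * n - ⌊Int.fract x * n⌋₊) / n := by
          rw [sub_div, mul_div_cancel_right₀ _ hn.ne', ← Int.self_sub_floor]; ring
        rw [h1, abs_div, abs_of_pos hn]
        apply div_le_div_of_nonneg_right _ hn.le
        rw [abs_le]
        constructor <;> linarith
    obtain ⟨i, hi, a, ha⟩ := hgrid n1 w.1 hn1p
    obtain ⟨j, hj, c, hc⟩ := hgrid n2 w.2 hn2p
    refine ⟨h'.F ((i : ℝ) / n1, (j : ℝ) / n2),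
      Finset.mem_image.2 ⟨(i, j), Finset.mem_product.2 ⟨hi, hj⟩, rfl⟩, fun t => ?_⟩
    rw [cj, cj, h'.GF, ← hw, ← DD_int _ _ a c, ← h'.pF]
    refine (DD_le _ _).trans_lt ?_
    refine (hL _ _).trans_lt ?_
    have hbound : ‖(SS s M).F (w + (t, 0)) -
        (SS s M).F (((i : ℝ) / n1, (j : ℝ) / n2) + (t, 0) + ((a : ℝ), (c : ℝ)))‖ ≤
        1 / n2 + 2 * Real.pi * M * s * (1 / n1) := by
      rw [SS_F, SS_F, R2norm_le_iff]
      have h3 := sn_lip (by linarith : 0 ≤ s) M (w.1 + t) ((i : ℝ) / n1 + t + a)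
      have e1 : w.1 + t - ((i : ℝ) / n1 + t + a) = w.1 - ((i : ℝ) / n1 + a) := by ring
      rw [e1] at h3
      have h4 : 1 ≤ 2 * Real.pi * M * s := by nlinarith
      have h5 : 2 * Real.pi * M * s * |w.1 - ((i : ℝ) / n1 + a)| ≤ 2 * Real.pi * M * s * (1 / n1) :=
        mul_le_mul_of_nonneg_left ha (by linarith)
      have h6 : (0 : ℝ) < 1 / n2 := by positivity
      have h7 : (0 : ℝ) < 1 / n1 := by positivity
      simp only [Prod.mk_sub_mk, Prod.fst_add, Prod.snd_add]
      constructor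
      · rw [e1]; nlinarith
      · have e2 : w.2 + 0 + sn s M (w.1 + t) - ((j : ℝ) / n2 + 0 + c + sn s M ((i : ℝ) / n1 + t + a)) =
          (w.2 - ((j : ℝ) / n2 + c)) + (sn s M (w.1 + t) - sn s M ((i : ℝ) / n1 + t + a)) := by ring
        rw [e2]
        refine (abs_add_le _ _).trans ?_
        linarith
    have hA : L * (1 / n2) ≤ ε / 8 := by
      rw [mul_one_div, div_le_iff₀ hn2p]
      rw [hX2, div_le_iff₀ hε] at hn2a
      linarith
    have hB : L * (2 * Real.pi * M * s * (1 / n1)) ≤ ε / 8 := by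
      have : L * (2 * Real.pi * M * s * (1 / n1)) = (2 * (Real.pi * (L * (M * s)))) / n1 := by ring
      rw [this, div_le_iff₀ hn1p]
      rw [hX1, div_le_iff₀ hε] at hn1a
      linarith
    have := mul_le_mul_of_nonneg_left hbound (by linarith : 0 ≤ L)
    calc _ ≤ L * (1 / n2 + 2 * Real.pi * M * s * (1 / n1)) := this
      _ < ε / 2 := by rw [mul_add]; linarith


/-! ### separation -/

/-- vertical pairs at distance `1/2` get separated by `e` somewhere -/
def VSep (h : Dif) (e : ℝ) : Prop :=
  ∀ y : ℝ, ∃ x : ℝ, e ≤ DD (h.F (x, y + 1 / 2)) (h.F (x, y))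

lemma VSep.mono {h : Dif} {e e' : ℝ} (hs : VSep h e) (he : e' ≤ e) : VSep h e' :=
  fun y => let ⟨x, hx⟩ := hs y; ⟨x, he.trans hx⟩

lemma sep_id : VSep Dif.idd (1 / 2) := by
  intro y
  refine ⟨0, ?_⟩
  rw [DD_eq]
  simp only [Dif.idd, id]
  have : y + 1 / 2 - y = 1 / 2 := by ring
  rw [this]
  apply le_trans _ (le_max_right _ _)
  rw [UnitAddCircle.norm_eq]
  have : round (1 / 2 : ℝ) = 1 := by rw [one_div]; exact round_two_inv
  rw [this, abs_of_nonpos] <;> norm_num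

lemma VSep.gd {h : Dif} {e L : ℝ} (hs : VSep h e)
    (hL : ∀ p p', ‖h.F p - h.F p'‖ ≤ L * ‖p - p'‖) (hL0 : 0 ≤ L)
    {b : ℝ → ℝ} {hb : Function.Periodic b 1} {hc : ContDiff ℝ (⊤ : ℕ∞) b} (hb1 : ∀ x, |b x| ≤ 1)
    {Q : ℕ} (hQ : 0 < Q) : VSep (h.comp (gd b hb hc Q)) (e - 4 * L / Q) := by
  intro y
  set c1 := b (y + 1 / 2) with hc1
  set c2 := b y with hc2
  have hQ' : (0 : ℝ) < Q := by exact_mod_cast hQ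
  -- a phase at which the two values agree
  have hphase : ∃ u : ℝ, b (u + c1) = b (u + c2) := by
    obtain ⟨x0, hx0, hmax⟩ := (isCompact_Icc (a := (0 : ℝ)) (b := 1)).exists_isMaxOn
      ⟨0, by simp⟩ hc.continuous.continuousOn
    have hmx : ∀ x, b x ≤ b x0 := by
      intro x
      have h1 : b x = b (Int.fract x) := by
        conv_lhs => rw [← Int.fract_add_floor x]
        exact per_int hb _ _
      rw [h1]
      exact hmax ⟨Int.fract_nonneg _, (Int.fract_lt_one _).le⟩
    have := intermediate_value_univ₂ (a := x0 - c2) (b := x0 - c1)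
      (f := fun u => b (u + c1)) (g := fun u => b (u + c2))
      (hc.continuous.comp (by fun_prop)) (hc.continuous.comp (by fun_prop))
      (by simpa using hmx _) (by simpa using hmx _)
    exact this
  obtain ⟨u, hu⟩ := hphase
  obtain ⟨xs, hxs⟩ := hs (y - b (u + c2))
  set j := ⌊Q * xs - u⌋ with hj
  have hj1 := Int.floor_le (Q * xs - u)
  have hj2 := Int.lt_floor_add_one (Q * xs - u)
  rw [← hj] at hj1 hj2
  refine ⟨(u + j) / Q, ?_⟩
  have hval : ∀ y' c : ℝ, b y' = c → b (u + c) = b (u + c2) →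
      (h.comp (_root_.gd b hb hc Q)).F ((u + j) / Q, y') =
        h.F ((u + j) / Q + c / Q, y' - b (u + c2)) := by
    intro y' c h1 h2
    simp only [Dif.comp, Function.comp]
    rw [gd_F]
    simp only [h1]
    have : (Q : ℝ) * ((u + j) / Q + c / Q) = (u + c) + j := by field_simp; ring
    rw [this, per_int hb, h2]
  rw [hval _ c1 rfl hu, hval _ c2 rfl rfl]
  have hclose : ∀ c y' : ℝ, |c| ≤ 1 → ‖h.F (xs, y') - h.F ((u + j) / Q + c / Q, y')‖ ≤ 2 * L / Q := by
    intro c y' hc'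
    refine (hL _ _).trans ?_
    rw [mul_comm 2 L, mul_div_assoc]
    apply mul_le_mul_of_nonneg_left _ hL0
    rw [R2norm_le_iff]
    have e1 : xs - ((u + j) / Q + c / Q) = ((Q * xs - u - j) - c) / Q := by field_simp; ring
    rw [abs_le] at hc'
    constructor
    · simp only [Prod.mk_sub_mk]
      rw [e1, abs_div, abs_of_pos hQ']
      apply div_le_div_of_nonneg_right _ hQ'.le
      rw [abs_le]; constructor <;> linarith
    · simp; positivity
  have := DD_pert (h.F (xs, y - b (u + c2) + 1 / 2)) (h.F (xs, y - b (u + c2)))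
    (h.F ((u + j) / Q + c1 / Q, y - b (u + c2) + 1 / 2)) (h.F ((u + j) / Q + c2 / Q, y - b (u + c2)))
  have k1 := hclose c1 (y - b (u + c2) + 1 / 2) (hb1 _)
  have k2 := hclose c2 (y - b (u + c2)) (hb1 _)
  have e2 : y + 1 / 2 - b (u + c2) = y - b (u + c2) + 1 / 2 := by ring
  rw [e2]
  have e3 : 4 * L / Q = 2 * L / Q + 2 * L / Q := by ring
  linarith

lemma VSep.SS {k : Dif} {e L : ℝ} (hs : VSep k e)
    (hL : ∀ p p', ‖k.F p - k.F p'‖ ≤ L * ‖p - p'‖) (hL0 : 0 ≤ L)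
    {s : ℝ} {M : ℕ} (hM : 0 < M) : VSep (k.comp (SS s M)) (e - 4 * L / M) := by
  intro y
  have hM' : (0 : ℝ) < M := by exact_mod_cast hM
  obtain ⟨xs, hxs⟩ := hs y
  set j := ⌊M * xs⌋ with hj
  have hj1 := Int.floor_le (M * xs)
  have hj2 := Int.lt_floor_add_one (M * xs)
  rw [← hj] at hj1 hj2
  refine ⟨j / M, ?_⟩
  have hsn : sn s M ((j : ℝ) / M) = 0 := by
    have h0 : sn s M 0 = 0 := by simp [sn]
    have := sn_add s (M := M) (β := (j : ℝ) / M) (c := j) (by field_simp) 0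
    rwa [zero_add, h0] at this
  have hval : ∀ y', (k.comp (_root_.SS s M)).F ((j : ℝ) / M, y') = k.F ((j : ℝ) / M, y') := by
    intro y'
    simp [Dif.comp, SS_F, hsn]
  rw [hval, hval]
  have hclose : ∀ y' : ℝ, ‖k.F (xs, y') - k.F ((j : ℝ) / M, y')‖ ≤ L / M := by
    intro y'
    refine (hL _ _).trans ?_
    rw [div_eq_mul_one_div L]
    apply mul_le_mul_of_nonneg_left _ hL0
    rw [R2norm_le_iff]
    have e1 : xs - j / M = (M * xs - j) / M := by field_simp
    constructor
    · simp only [Prod.mk_sub_mk]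
      rw [e1, abs_div, abs_of_pos hM']
      apply div_le_div_of_nonneg_right _ hM'.le
      rw [abs_le]; constructor <;> linarith
    · simp
  have := DD_pert (k.F (xs, y + 1 / 2)) (k.F (xs, y)) (k.F ((j : ℝ) / M, y + 1 / 2)) (k.F ((j : ℝ) / M, y))
  have k1 := hclose (y + 1 / 2)
  have k2 := hclose y
  have e3 : 4 * L / M = L / M + L / M + 2 * (L / M) := by ring
  have e4 : 0 ≤ L / M := by positivity
  linarith

/-- two nearby points get separated by the stretched rotation -/
lemma sep_pair {k : Dif} {e L : ℝ} (hs : VSep k e)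
    (hL : ∀ p p', ‖k.F p - k.F p'‖ ≤ L * ‖p - p'‖) (hL0 : 0 ≤ L)
    {s : ℝ} (hs0 : 0 < s) {M : ℕ} (hM : 0 < M) (x1 x2 : ℝ)
    (h1 : 1 / 8 ≤ M * s * (x1 - x2)) (h2 : M * (x1 - x2) ≤ 1 / 2) :
    ∃ t, e - 4 * L / M ≤ DD ((k.comp (SS s M)).F (x1 + t, 0)) ((k.comp (SS s M)).F (x2 + t, 0)) := by
  have hM' : (0 : ℝ) < M := by exact_mod_cast hM
  have hpi := Real.pi_pos
  have hdiff : ∀ t, sn s M (x1 + t) - sn s M (x2 + t) =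
      2 * s * Real.sin (Real.pi * (M * (x1 - x2))) * Real.cos (Real.pi * M * (x1 + x2 + 2 * t)) := by
    intro t
    unfold sn
    rw [← mul_sub, Real.sin_sub_sin]
    have e1 : (2 * Real.pi * (M * (x1 + t)) - 2 * Real.pi * (M * (x2 + t))) / 2 =
      Real.pi * (M * (x1 - x2)) := by ring
    have e2 : (2 * Real.pi * (M * (x1 + t)) + 2 * Real.pi * (M * (x2 + t))) / 2 =
      Real.pi * M * (x1 + x2 + 2 * t) := by ring
    rw [e1, e2]; ring
  have hD0 : 0 < x1 - x2 := by
    by_contra hcon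
    push Not at hcon
    have : M * s * (x1 - x2) ≤ 0 := mul_nonpos_of_nonneg_of_nonpos (by positivity) hcon
    linarith
  have hsin : 2 * (M * (x1 - x2)) ≤ Real.sin (Real.pi * (M * (x1 - x2))) := by
    have := Real.mul_le_sin (x := Real.pi * (M * (x1 - x2))) (by positivity) (by nlinarith)
    calc 2 * (M * (x1 - x2)) = 2 / Real.pi * (Real.pi * (M * (x1 - x2))) := by field_simp
      _ ≤ _ := this
  obtain ⟨v, hv⟩ : ∃ v, sn s M (x1 + v) - sn s M (x2 + v) = 1 / 2 := by
    have hcont : Continuous fun v => sn s M (x1 + v) - sn s M (x2 + v) :=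
      ((sn_cd s M).continuous.comp (by fun_prop)).sub ((sn_cd s M).continuous.comp (by fun_prop))
    have := mem_range_of_exists_le_of_exists_ge hcont (c := 1 / 2)
      ⟨(1 / (2 * M) - x1 - x2) / 2, ?_⟩ ⟨(-x1 - x2) / 2, ?_⟩
    · exact this
    · rw [hdiff]
      have e1 : Real.pi * M * (x1 + x2 + 2 * ((1 / (2 * M) - x1 - x2) / 2)) = Real.pi / 2 := by
        field_simp; ring
      rw [e1, Real.cos_pi_div_two]; norm_num
    · rw [hdiff]
      have e1 : Real.pi * M * (x1 + x2 + 2 * ((-x1 - x2) / 2)) = 0 := by ring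
      rw [e1, Real.cos_zero]
      nlinarith
  obtain ⟨xs, hxs⟩ := hs (sn s M (x2 + v))
  set j := ⌊M * (xs - x1 - v)⌋ with hj
  have hj1 := Int.floor_le (M * (xs - x1 - v))
  have hj2 := Int.lt_floor_add_one (M * (xs - x1 - v))
  rw [← hj] at hj1 hj2
  refine ⟨v + j / M, ?_⟩
  have hval : ∀ x, (k.comp (_root_.SS s M)).F (x + (v + j / M), 0) =
      k.F (x + (v + j / M), sn s M (x + v)) := by
    intro x
    have : sn s M (x + (v + j / M)) = sn s M (x + v) := by
      rw [← add_assoc]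
      exact sn_add s (c := j) (by field_simp) _
    simp [Dif.comp, SS_F, this]
  rw [hval, hval]
  have hclose : ∀ x y' : ℝ, 0 ≤ x1 - x → M * (x1 - x) ≤ 1 / 2 →
      ‖k.F (xs, y') - k.F (x + (v + j / M), y')‖ ≤ 2 * L / M := by
    intro x y' hx hx'
    refine (hL _ _).trans ?_
    rw [mul_comm 2 L, mul_div_assoc]
    apply mul_le_mul_of_nonneg_left _ hL0
    rw [R2norm_le_iff]
    have e1 : xs - (x + (v + j / M)) = ((M * (xs - x1 - v) - j) + M * (x1 - x)) / M := by
      field_simp; ring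
    constructor
    · simp only [Prod.mk_sub_mk]
      rw [e1, abs_div, abs_of_pos hM']
      apply div_le_div_of_nonneg_right _ hM'.le
      have : 0 ≤ M * (x1 - x) := by positivity
      rw [abs_le]; constructor <;> linarith
    · simp; positivity
  have hy : sn s M (x1 + v) = sn s M (x2 + v) + 1 / 2 := by linarith
  rw [hy]
  have := DD_pert (k.F (xs, sn s M (x2 + v) + 1 / 2)) (k.F (xs, sn s M (x2 + v)))
    (k.F (x1 + (v + j / M), sn s M (x2 + v) + 1 / 2)) (k.F (x2 + (v + j / M), sn s M (x2 + v)))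
  have k1 := hclose x1 (sn s M (x2 + v) + 1 / 2) (by simp) (by simp)
  have k2 := hclose x2 (sn s M (x2 + v)) hD0.le h2
  have e3 : 4 * L / M = 2 * L / M + 2 * L / M := by ring
  linarith

/-- the lower count -/
lemma lower_count {k : Dif} {e L : ℝ} (hs : VSep k e)
    (hL : ∀ p p', ‖k.F p - k.F p'‖ ≤ L * ‖p - p'‖) (hL0 : 0 ≤ L)
    {s : ℝ} (hs0 : 0 < s) {q l N : ℕ} (hq : 0 < q) (hl : 0 < l) (hN : 0 < N)
    {α : ℝ} {c : ℤ} (hα : q * α = c) :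
    ∃ P : ℕ → ℝ × ℝ, ∀ j j' : ℕ, (j : ℝ) ≤ 4 * s → (j' : ℝ) ≤ 4 * s → j ≠ j' →
      ∃ i < q * l * N, e - 4 * L / (q * l : ℕ) - 2 * (L * (1 + 2 * Real.pi * (q * l : ℕ) * s)) / N ≤
        DD (cj (k.comp (SS s (q * l))) (i * (α + 1 / ((q * l : ℕ) * N))) (P j))
          (cj (k.comp (SS s (q * l))) (i * (α + 1 / ((q * l : ℕ) * N))) (P j')) := by
  set M := q * l with hM
  have hMp : 0 < M := Nat.mul_pos hq hl
  have hM' : (0 : ℝ) < M := by exact_mod_cast hMp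
  have hN' : (0 : ℝ) < N := by exact_mod_cast hN
  have hl' : (0 : ℝ) < l := by exact_mod_cast hl
  have hq' : (0 : ℝ) < q := by exact_mod_cast hq
  set h' := k.comp (SS s M) with hh'
  refine ⟨fun j => h'.F (j / (8 * M * s), 0), ?_⟩
  have main : ∀ j j' : ℕ, (j : ℝ) ≤ 4 * s → (j' : ℝ) ≤ 4 * s → j' < j →
      ∃ i < M * N, e - 4 * L / M - 2 * (L * (1 + 2 * Real.pi * M * s)) / N ≤
        DD (cj h' (i * (α + 1 / (M * N))) (h'.F (j / (8 * M * s), 0)))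
          (cj h' (i * (α + 1 / (M * N))) (h'.F (j' / (8 * M * s), 0))) := by
    intro j j' hj hj' hlt
    have hlt' : (j' : ℝ) + 1 ≤ j := by exact_mod_cast hlt
    have hj0 : (0 : ℝ) ≤ j' := Nat.cast_nonneg _
    obtain ⟨t, ht⟩ := sep_pair hs hL hL0 hs0 hMp (j / (8 * M * s)) (j' / (8 * M * s))
      (by
        have : M * s * ((j : ℝ) / (8 * M * s) - j' / (8 * M * s)) = (j - j') / 8 := by
          field_simp
        rw [this]; linarith)
      (by
        have : M * ((j : ℝ) / (8 * M * s) - j' / (8 * M * s)) = (j - j') / (8 * s) := by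
          field_simp
        rw [this, div_le_iff₀ (by positivity)]; linarith)
    have hf0 := Int.fract_nonneg t
    have hf1 := Int.fract_lt_one t
    have hlN : (0 : ℝ) < l * N := by positivity
    set j0 := ⌊Int.fract t * (l * N)⌋₊ with hj0
    have hfl := Nat.floor_le (mul_nonneg hf0 hlN.le)
    have hfl2 := Nat.lt_floor_add_one (Int.fract t * (l * N))
    rw [← hj0] at hfl hfl2
    have hj0lt : j0 < l * N := by
      have : (j0 : ℝ) < l * N := by nlinarith
      exact_mod_cast this
    refine ⟨q * j0, ?_, ?_⟩
    · rw [hM, mul_assoc]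
      exact Nat.mul_lt_mul_of_pos_left hj0lt hq
    · have e1 : ((q * j0 : ℕ) : ℝ) * (α + 1 / (M * N)) = (j0 * c : ℤ) + j0 / (l * N) := by
        rw [hM]
        push_cast
        rw [← hα]
        field_simp
      set A : ℤ := j0 * c - ⌊t⌋ with hA
      set d : ℝ := (j0 : ℝ) / (l * N) - Int.fract t with hd
      have e2 : ((q * j0 : ℕ) : ℝ) * (α + 1 / (M * N)) = t + d + A := by
        rw [e1, hd, hA, ← Int.self_sub_floor]; push_cast; ring
      have hdabs : |d| ≤ 1 / N := by
        have : d = -((Int.fract t * (l * N) - j0) / (l * N)) := by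
          rw [hd]; field_simp; ring
        rw [this, abs_neg, abs_div, abs_of_pos hlN]
        have h1 : |Int.fract t * (l * N) - j0| ≤ 1 := by
          rw [abs_le]; constructor <;> linarith
        have hl1 : (1 : ℝ) ≤ l := by exact_mod_cast hl
        rw [div_le_div_iff₀ hlN hN']
        nlinarith [abs_nonneg (Int.fract t * (l * N) - j0)]
      have hv : ∀ x : ℝ, cj h' (((q * j0 : ℕ) : ℝ) * (α + 1 / (M * N))) (h'.F (x, 0)) =
          h'.F (x + t + d, 0) + ((A : ℝ), ((0 : ℤ) : ℝ)) := by
        intro x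
        rw [cj, h'.GF, e2, ← h'.pF]
        congr 1
        ext
        · simp; ring
        · simp
      rw [hv, hv, DD_int, DD_comm, DD_int, DD_comm]
      have hcl : ∀ x : ℝ, ‖h'.F (x + t, 0) - h'.F (x + t + d, 0)‖ ≤
          (L * (1 + 2 * Real.pi * M * s)) / N := by
        intro x
        refine (comp_SS_lip hL hL0 hs0.le M _ _).trans ?_
        rw [div_eq_mul_one_div (L * (1 + 2 * Real.pi * M * s))]
        apply mul_le_mul_of_nonneg_left _ (by positivity)
        rw [R2norm_le_iff]
        constructor
        · simpa using hdabs
        · simp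
      have := DD_pert (h'.F (j / (8 * M * s) + t, 0)) (h'.F (j' / (8 * M * s) + t, 0))
        (h'.F (j / (8 * M * s) + t + d, 0)) (h'.F (j' / (8 * M * s) + t + d, 0))
      have k1 := hcl (j / (8 * M * s))
      have k2 := hcl (j' / (8 * M * s))
      have e5 : 2 * (L * (1 + 2 * Real.pi * M * s)) / N =
        (L * (1 + 2 * Real.pi * M * s)) / N + (L * (1 + 2 * Real.pi * M * s)) / N := by ring
      linarith
  intro j j' hj hj' hne
  rcases lt_or_gt_of_ne hne with hlt | hlt
  · obtain ⟨i, hi, h⟩ := main j' j hj' hj hlt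
    exact ⟨i, hi, by rw [DD_comm]; exact h⟩
  · exact main j j' hj hj' hlt


/-! ### the good set for the almost-inverse of the first coordinate -/

instance circle_prob : IsProbabilityMeasure (volume : Measure Torus1) :=
  ⟨by rw [AddCircle.measure_univ]; simp⟩

instance torus_prob : IsProbabilityMeasure (volume : Measure Torus2) :=
  inferInstanceAs (IsProbabilityMeasure ((volume : Measure Torus1).prod volume))

/-- the arc `[η, 1-η]` of the circle -/
def arc (η : ℝ) : Set Torus1 := (fun x : ℝ => (x : Torus1)) '' Icc η (1 - η)

lemma arc_meas (η : ℝ) : MeasurableSet (arc η) :=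
  (isCompact_Icc.image (AddCircle.continuous_mk' 1)).measurableSet

lemma arc_compl {η : ℝ} (h0 : 0 < η) (h1 : η < 1 / 2) :
    volume (arc η)ᶜ ≤ ENNReal.ofReal (2 * η) := by
  have hmp := AddCircle.measurePreserving_mk 1 0
  rw [prob_compl_eq_one_sub (arc_meas η), ← hmp.measure_preimage (arc_meas η).nullMeasurableSet,
    Measure.restrict_apply (hmp.measurable (arc_meas η))]
  have hsub : Icc η (1 - η) ⊆ (QuotientAddGroup.mk ⁻¹' arc η) ∩ Ioc (0 : ℝ) (0 + 1) := by
    intro x hx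
    refine ⟨⟨x, hx, rfl⟩, ?_, ?_⟩
    · linarith [hx.1]
    · linarith [hx.2]
  have hle := measure_mono (μ := (volume : Measure ℝ)) hsub
  rw [Real.volume_Icc] at hle
  refine (tsub_le_tsub_left hle 1).trans ?_
  rw [← ENNReal.ofReal_one, ← ENNReal.ofReal_sub _ (by linarith)]
  apply ENNReal.ofReal_le_ofReal; linarith

/-- the good set in the source coordinates -/
def goodS (η : ℝ) (Q : ℕ) : Set Torus2 := {z | Q • z.1 ∈ arc η ∧ z.2 + Q • z.1 ∈ arc η}

lemma goodS_meas (η : ℝ) (Q : ℕ) : MeasurableSet (goodS η Q) := by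
  apply MeasurableSet.inter
  · exact (by fun_prop : Continuous fun z : Torus2 => Q • z.1).measurable (arc_meas η)
  · exact (by fun_prop : Continuous fun z : Torus2 => z.2 + Q • z.1).measurable (arc_meas η)

lemma goodS_compl {η : ℝ} (h0 : 0 < η) (h1 : η < 1 / 2) {Q : ℕ} (hQ : 1 < Q) :
    volume (goodS η Q)ᶜ ≤ ENNReal.ofReal (4 * η) := by
  have hm1 : MeasurePreserving (fun z : Torus1 × Torus1 => Q • z.1) volume volume :=
    (AddCircle.ergodic_nsmul (T := 1) hQ).toMeasurePreserving.comp measurePreserving_fst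
  have hm2 : MeasurePreserving (fun z : Torus1 × Torus1 => z.2 + Q • z.1) volume volume := by
    have hsk : MeasurePreserving (fun z : Torus1 × Torus1 =>
        (id z.1, (fun (x : Torus1) (y : Torus1) => y + Q • x) z.1 z.2)) volume volume :=
      (MeasurePreserving.id _).skew_product
        (by exact (by fun_prop : Continuous fun z : Torus1 × Torus1 => z.2 + Q • z.1).measurable)
        (Eventually.of_forall fun a => map_add_right_eq_self volume _)
    exact measurePreserving_snd.comp hsk
  have hsub : (goodS η Q)ᶜ ⊆ (fun z : Torus1 × Torus1 => Q • z.1) ⁻¹' (arc η)ᶜ ∪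
      (fun z : Torus1 × Torus1 => z.2 + Q • z.1) ⁻¹' (arc η)ᶜ := by
    intro z hz
    by_contra hcon
    simp only [mem_union, mem_preimage, mem_compl_iff, not_or, not_not] at hcon
    exact hz hcon
  refine (measure_mono hsub).trans ((measure_union_le _ _).trans ?_)
  rw [hm1.measure_preimage (arc_meas η).compl.nullMeasurableSet,
    hm2.measure_preimage (arc_meas η).compl.nullMeasurableSet]
  have := arc_compl h0 h1
  calc _ ≤ ENNReal.ofReal (2 * η) + ENNReal.ofReal (2 * η) := add_le_add this this
    _ = _ := by rw [← ENNReal.ofReal_add (by linarith) (by linarith)]; congr 1; ring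

lemma good_eval {η : ℝ} {Q : ℕ} (hQ : 0 < Q) {b : ℝ → ℝ} {hb : Function.Periodic b 1}
    {hc : ContDiff ℝ (⊤ : ℕ∞) b} (hbη : ∀ x, η ≤ x → x ≤ 1 - η → b x = x) {w : ℝ × ℝ}
    (hw : torusProj w ∈ goodS η Q) : ∃ a : ℤ, Q * ((gd b hb hc Q).G w).1 = -w.2 + a := by
  have hQ' : (0 : ℝ) < Q := by exact_mod_cast hQ
  obtain ⟨⟨u, hu, h1⟩, ⟨v, hv, h2⟩⟩ := hw
  simp only [torusProj] at h1 h2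
  have e1 : Q • (w.1 : Torus1) = ((Q * w.1 : ℝ) : Torus1) := by
    rw [← AddCircle.coe_nsmul, nsmul_eq_mul]
  rw [e1] at h1 h2
  rw [← AddCircle.coe_add] at h2
  obtain ⟨a, ha⟩ := circle_eq_iff.1 h1
  obtain ⟨a', ha'⟩ := circle_eq_iff.1 h2
  have k1 : b (Q * w.1) = u := by rw [ha, per_int hb, hbη u hu.1 hu.2]
  have k2 : b (w.2 + b (Q * w.1)) = v := by
    rw [k1]
    have : w.2 + u = v + (a' - a : ℤ) := by push_cast; linarith
    rw [this, per_int hb, hbη v hv.1 hv.2]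
  rw [gd_G]
  simp only
  rw [k2]
  refine ⟨a', ?_⟩
  field_simp
  linarith

lemma gd_fst {Q : ℕ} {b : ℝ → ℝ} {hb : Function.Periodic b 1}
    {hc : ContDiff ℝ (⊤ : ℕ∞) b} (hb1 : ∀ x, |b x| ≤ 1) (w : ℝ × ℝ) :
    |((gd b hb hc Q).G w).1 - w.1| ≤ 1 / Q := by
  rw [gd_G]
  simp only
  rw [sub_sub_cancel_left, abs_neg, abs_div, Nat.abs_cast]
  gcongr
  exact hb1 _

/-- nearby first coordinates force nearby points on the good set -/
lemma good_inj {h : Dif} {L : ℝ} (hL : ∀ p p', ‖h.F p - h.F p'‖ ≤ L * ‖p - p'‖) (hL0 : 0 ≤ L)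
    {η : ℝ} {Q : ℕ} (hQ : 0 < Q) {b : ℝ → ℝ} {hb : Function.Periodic b 1}
    {hc : ContDiff ℝ (⊤ : ℕ∞) b} (hb1 : ∀ x, |b x| ≤ 1)
    (hbη : ∀ x, η ≤ x → x ≤ 1 - η → b x = x) {p p' : ℝ × ℝ} {θ : ℝ}
    (hp : torusProj p ∈ desc h.G ⁻¹' goodS η Q) (hp' : torusProj p' ∈ desc h.G ⁻¹' goodS η Q)
    (hθ : ‖((((gd b hb hc Q).G (h.G p)).1 - ((gd b hb hc Q).G (h.G p')).1 : ℝ) : Torus1)‖ ≤ θ) :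
    DD p p' ≤ L * (Q * θ + 2 / Q) := by
  have hQ' : (1 : ℝ) ≤ Q := by exact_mod_cast hQ
  have hθ0 : 0 ≤ θ := (norm_nonneg _).trans hθ
  rw [mem_preimage, desc_proj h.pG] at hp hp'
  obtain ⟨a, ha⟩ := good_eval (hb := hb) (hc := hc) hQ hbη hp
  obtain ⟨a', ha'⟩ := good_eval (hb := hb) (hc := hc) hQ hbη hp'
  have k1 := gd_fst (hb := hb) (hc := hc) (Q := Q) hb1 (h.G p)
  have k2 := gd_fst (hb := hb) (hc := hc) (Q := Q) hb1 (h.G p')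
  set w := h.G p
  set w' := h.G p'
  set x := ((gd b hb hc Q).G w).1
  set x' := ((gd b hb hc Q).G w').1
  obtain ⟨c, hc'⟩ := circle_rep (x - x')
  rw [← hc'] at hθ
  have hDD : DD w w' ≤ Q * θ + 2 / Q := by
    have := DD_int w w' c (a - a' - Q * c)
    rw [← this]
    refine (DD_le _ _).trans ?_
    rw [R2norm_le_iff]
    have h2Q : 0 ≤ 2 / (Q : ℝ) := by positivity
    constructor
    · simp only [Prod.fst_sub, Prod.fst_add]
      rw [abs_le] at *
      have : (2 : ℝ) / Q = 1 / Q + 1 / Q := by ring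
      constructor <;> nlinarith
    · simp only [Prod.snd_sub, Prod.snd_add]
      have e : w.2 - (w'.2 + ((a - a' - Q * c : ℤ) : ℝ)) = - (Q * (x - x' - c)) := by
        push_cast
        linarith
      rw [e, abs_neg, abs_mul, Nat.abs_cast]
      nlinarith
  have := DD_lip h.pF hL w w'
  rw [h.FG, h.FG] at this
  exact this.trans (mul_le_mul_of_nonneg_left hDD hL0)


/-! ### asymptotics in `N` -/

lemma ev_ratio {a : ℝ} (ha1 : a < 1) :
    Tendsto (fun N : ℕ => (N : ℝ) ^ a / N) atTop (𝓝 0) := by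
  have h := (tendsto_rpow_neg_atTop (y := 1 - a) (by linarith)).comp
    (tendsto_natCast_atTop_atTop (R := ℝ))
  refine h.congr' ?_
  filter_upwards [eventually_gt_atTop 0] with N hN
  have hN' : (0 : ℝ) < N := by exact_mod_cast hN
  simp only [Function.comp]
  rw [neg_sub, Real.rpow_sub hN', Real.rpow_one]

lemma ev_tau {a : ℝ} (ha1 : a < 1) {M : ℕ} (hM : 0 < M) (σ : ℝ) (hσ : |σ| = 1) :
    Tendsto (fun N : ℕ => ((σ * (1 / ((M : ℝ) * N)),
      (N : ℝ) ^ a * (Real.cos (2 * Real.pi * (M * (σ * (1 / ((M : ℝ) * N))))) - 1),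
      (N : ℝ) ^ a * Real.sin (2 * Real.pi * (M * (σ * (1 / ((M : ℝ) * N)))))) : ℝ × ℝ × ℝ))
      atTop (𝓝 0) := by
  have hM' : (0 : ℝ) < M := by exact_mod_cast hM
  have hr := ev_ratio ha1
  have hr2 : Tendsto (fun N : ℕ => 2 * Real.pi * ((N : ℝ) ^ a / N)) atTop (𝓝 0) := by
    simpa using hr.const_mul (2 * Real.pi)
  have habs : ∀ N : ℕ, 0 < N → |2 * Real.pi * (M * (σ * (1 / ((M : ℝ) * N))))| =
      2 * Real.pi * (1 / N) := by
    intro N hN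
    have hN' : (0 : ℝ) < N := by exact_mod_cast hN
    have : 2 * Real.pi * (M * (σ * (1 / ((M : ℝ) * N)))) = σ * (2 * Real.pi * (1 / N)) := by
      field_simp
    rw [this, abs_mul, hσ, one_mul, abs_of_nonneg]
    have := Real.pi_pos
    positivity
  refine Tendsto.prodMk_nhds ?_ (Tendsto.prodMk_nhds ?_ ?_)
  · have h1 : Tendsto (fun N : ℕ => σ * (1 / (M : ℝ) * (1 / (N : ℝ)))) atTop (𝓝 (σ * (1 / (M : ℝ) * 0))) :=
      (tendsto_one_div_atTop_nhds_zero_nat.const_mul _).const_mul _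
    simp only [mul_zero] at h1
    refine h1.congr fun N => ?_
    rw [one_div_mul_one_div]
  · refine squeeze_zero_norm' ?_ hr2
    filter_upwards [eventually_gt_atTop 0] with N hN
    rw [Real.norm_eq_abs, abs_mul, abs_of_nonneg (Real.rpow_nonneg (Nat.cast_nonneg _) _)]
    have := Real.abs_cos_sub_cos_le (2 * Real.pi * (M * (σ * (1 / ((M : ℝ) * N))))) 0
    rw [Real.cos_zero, sub_zero, habs N hN] at this
    calc _ ≤ (N : ℝ) ^ a * (2 * Real.pi * (1 / N)) :=
          mul_le_mul_of_nonneg_left this (Real.rpow_nonneg (Nat.cast_nonneg _) _)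
      _ = _ := by ring
  · refine squeeze_zero_norm' ?_ hr2
    filter_upwards [eventually_gt_atTop 0] with N hN
    rw [Real.norm_eq_abs, abs_mul, abs_of_nonneg (Real.rpow_nonneg (Nat.cast_nonneg _) _)]
    have := Real.abs_sin_le_abs (x := 2 * Real.pi * (M * (σ * (1 / ((M : ℝ) * N)))))
    rw [habs N hN] at this
    calc _ ≤ (N : ℝ) ^ a * (2 * Real.pi * (1 / N)) :=
          mul_le_mul_of_nonneg_left this (Real.rpow_nonneg (Nat.cast_nonneg _) _)
      _ = _ := by ring

lemma ev_gam {a : ℝ} (ha0 : 0 < a) (ha1 : a < 1) {L : ℝ} (M : ℕ) {e : ℝ} (he : 0 < e) :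
    ∀ᶠ N : ℕ in atTop, L * (1 + 2 * Real.pi * M * (N : ℝ) ^ a) / N ≤ e := by
  have h1 : Tendsto (fun N : ℕ => L * (1 / (N : ℝ)) + L * (2 * Real.pi * M) * ((N : ℝ) ^ a / N)) atTop
      (𝓝 (L * 0 + L * (2 * Real.pi * M) * 0)) :=
    (tendsto_one_div_atTop_nhds_zero_nat.const_mul _).add ((ev_ratio ha1).const_mul _)
  simp only [mul_zero, add_zero] at h1
  filter_upwards [h1.eventually (ge_mem_nhds he)] with N hN
  calc _ = L * (1 / (N : ℝ)) + L * (2 * Real.pi * M) * ((N : ℝ) ^ a / N) := by ring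
    _ ≤ e := hN

lemma ev_low {a d : ℝ} (hd0 : 0 ≤ d) (hda : d < a) (M : ℕ) :
    ∀ᶠ N : ℕ in atTop, ((M * N : ℕ) : ℝ) ^ d ≤ 4 * (N : ℝ) ^ a := by
  have h := ((tendsto_rpow_neg_atTop (y := a - d) (by linarith)).comp
    (tendsto_natCast_atTop_atTop (R := ℝ))).const_mul ((M : ℝ) ^ d)
  rw [mul_zero] at h
  filter_upwards [h.eventually (ge_mem_nhds (by norm_num : (0 : ℝ) < 4)), eventually_gt_atTop 0]
    with N h1 hN
  have hN' : (0 : ℝ) < N := by exact_mod_cast hN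
  simp only [Function.comp] at h1
  push_cast
  rw [Real.mul_rpow (Nat.cast_nonneg _) hN'.le]
  rw [neg_sub, Real.rpow_sub hN', ← mul_div_assoc, div_le_iff₀ (by positivity)] at h1
  exact h1

lemma ev_up {a c : ℝ} (ha0 : 0 < a) (hc : 0 < c) (hac : a < (1 - a) * c) {L : ℝ} (hL : 0 < L)
    {M : ℕ} (hM : 0 < M) (C : ℝ) (hC : 0 ≤ C) {e : ℝ} (he : 0 < e) :
    ∀ᶠ N : ℕ in atTop, C * (N : ℝ) ^ a *
      (L * (1 + 2 * Real.pi * M * (N : ℝ) ^ a) * (1 / (M * N))) ^ c ≤ e := by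
  have hM' : (0 : ℝ) < M := by exact_mod_cast hM
  have hpi := Real.pi_pos
  set B := L * (1 + 2 * Real.pi * M) / M with hB
  have hBp : 0 < B := by positivity
  have h := ((tendsto_rpow_neg_atTop (y := (1 - a) * c - a) (by linarith)).comp
    (tendsto_natCast_atTop_atTop (R := ℝ))).const_mul (C * B ^ c)
  rw [mul_zero] at h
  filter_upwards [h.eventually (ge_mem_nhds he), eventually_gt_atTop 0] with N h1 hN
  have hN' : (0 : ℝ) < N := by exact_mod_cast hN
  have hN1 : (1 : ℝ) ≤ N := by exact_mod_cast hN
  have hs : 1 ≤ (N : ℝ) ^ a := Real.one_le_rpow hN1 ha0.le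
  refine le_trans ?_ h1
  have k1 : L * (1 + 2 * Real.pi * M * (N : ℝ) ^ a) * (1 / (M * N)) ≤ B * (N : ℝ) ^ (a - 1) := by
    rw [Real.rpow_sub hN', Real.rpow_one, hB]
    have : L * (1 + 2 * Real.pi * M) / M * ((N : ℝ) ^ a / N) =
      L * ((N : ℝ) ^ a + 2 * Real.pi * M * (N : ℝ) ^ a) * (1 / (M * N)) := by field_simp
    rw [this]
    gcongr
  have k2 : (L * (1 + 2 * Real.pi * M * (N : ℝ) ^ a) * (1 / (M * N))) ^ c ≤
      B ^ c * (N : ℝ) ^ ((a - 1) * c) := by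
    refine (Real.rpow_le_rpow (by positivity) k1 hc.le).trans ?_
    rw [Real.mul_rpow hBp.le (by positivity), ← Real.rpow_mul hN'.le]
  simp only [Function.comp]
  calc _ ≤ C * (N : ℝ) ^ a * (B ^ c * (N : ℝ) ^ ((a - 1) * c)) :=
        mul_le_mul_of_nonneg_left k2 (by positivity)
    _ = C * B ^ c * ((N : ℝ) ^ a * (N : ℝ) ^ ((a - 1) * c)) := by ring
    _ = _ := by
      rw [← Real.rpow_add hN']
      congr 2; ring


/-! ### the inductive step -/

/-- data of one stage of the construction -/
structure St where
  h : Dif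
  α : ℝ
  q : ℕ
  γ : ℝ
  U : ℝ
  θ : ℝ
  hq : 0 < q
  hα : ∃ c : ℤ, q * α = c
  hθ : 0 < θ

/-- relation between two consecutive stages -/
structure StepRel (K n : ℕ) (s s' : St) : Prop where
  c1 : ∀ k ≤ K - 1, ∀ p, ‖iteratedFDeriv ℝ k (fun p => cj s'.h s'.α p - cj s.h s.α p) p‖ ≤ (1 / 2) ^ n
  c2 : ∀ k ≤ K - 1, ∀ p,
    ‖iteratedFDeriv ℝ k (fun p => cj s'.h (-s'.α) p - cj s.h (-s.α) p) p‖ ≤ (1 / 2) ^ n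
  g0 : 0 < s'.γ
  g1 : s'.γ ≤ s.θ
  g2 : ∀ (i : ℕ) p, ‖cj s'.h (i * s'.α) p - cj s.h (i * s.α) p‖ ≤ s'.γ * i
  a0 : s.α < s'.α
  a1 : s'.α - s.α ≤ s.θ
  a2 : s'.θ * s'.q ≤ (1 / 2) ^ n
  p0 : ∀ p, |(s'.h.G p).1 - (s.h.G p).1| ≤ s.θ
  p1 : ∃ A : Set Torus2, MeasurableSet A ∧ volume Aᶜ ≤ ENNReal.ofReal ((1 / 2) ^ n) ∧
    ∀ p p', torusProj p ∈ A → torusProj p' ∈ A →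
      ‖(((s'.h.G p).1 - (s'.h.G p').1 : ℝ) : Torus1)‖ ≤ 4 * s'.θ → DD p p' ≤ (1 / 2) ^ n
  lo : ∃ m ≥ n, ∃ (J : ℕ) (P : ℕ → ℝ × ℝ), (m : ℝ) ^ (1 / (K : ℝ) ^ 4) ≤ J ∧ s'.θ * m ≤ 1 / 64 ∧
    ∀ j < J, ∀ j' < J, j ≠ j' →
      ∃ i < m, 1 / 4 ≤ DD (cj s'.h (i * s'.α) (P j)) (cj s'.h (i * s'.α) (P j'))
  u1 : ∀ ε : ℝ, 0 < ε → ε ≤ 1 → ∃ P : Finset (ℝ × ℝ), (P.card : ℝ) ≤ s'.U / ε ^ 2 ∧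
    ∀ p, ∃ p0 ∈ P, ∀ t, DD (cj s'.h t p) (cj s'.h t p0) < ε / 2
  u2 : s'.U * s'.γ ^ (1 / ((K : ℝ) ^ 4 - 3)) ≤ (1 / 2) ^ n
  t1 : s'.θ ≤ s.θ / 2
  t2 : s'.θ ≤ s'.γ / 2

set_option maxHeartbeats 2000000 in
lemma step (K n : ℕ) (hK : 1 < K) (s : St) (hs : VSep s.h (1 / 4 + (1 / 2) ^ n / 4)) :
    ∃ s' : St, StepRel K n s s' ∧ VSep s'.h (1 / 4 + (1 / 2) ^ (n + 1) / 4) := by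
  obtain ⟨h, α, q, γ0, U0, θ, hq, ⟨c, hα⟩, hθ⟩ := s
  simp only at hs
  -- constants
  set x : ℝ := (1 / 2) ^ n with hx
  have hx0 : 0 < x := by positivity
  have hx1 : x ≤ 1 := pow_le_one₀ (by norm_num) (by norm_num)
  have hK16 : (16 : ℝ) ≤ (K : ℝ) ^ 4 := by
    have h2 : (2 : ℝ) ≤ K := by exact_mod_cast hK
    calc (16 : ℝ) = 2 ^ 4 := by norm_num
      _ ≤ _ := by gcongr
  set X : ℝ := (K : ℝ) ^ 4 with hX
  set a : ℝ := 1 / (X - 1) with ha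
  have ha0 : 0 < a := by rw [ha]; apply one_div_pos.2; linarith
  have ha1 : a < 1 := by rw [ha, div_lt_one (by linarith)]; linarith
  have hda : 1 / X < a := by rw [ha]; apply one_div_lt_one_div_of_lt <;> linarith
  have hcp : 0 < 1 / (X - 3) := by apply one_div_pos.2; linarith
  have hac : a < (1 - a) * (1 / (X - 3)) := by
    rw [ha]
    have h1 : 0 < X - 1 := by linarith
    have h3 : 0 < X - 3 := by linarith
    rw [one_sub_div h1.ne', div_mul_div_comm, div_lt_div_iff₀ h1 (by positivity)]
    nlinarith
  obtain ⟨L, hL1, hL⟩ := exists_lip h.pF (h.cF.of_le (by exact_mod_cast le_top))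
  have hL0 : 0 < L := by linarith
  -- the saw
  obtain ⟨b, hb, hbc, hb1, hbη⟩ := exists_saw (x / 8) (by positivity) (by linarith)
  -- choose `Q`
  obtain ⟨l1, hl1⟩ := exists_nat_gt (max 2 (max (1 / θ) (128 * L / x)))
  rw [max_lt_iff, max_lt_iff] at hl1
  obtain ⟨hl1a, hl1b, hl1c⟩ := hl1
  have hl1p : 0 < l1 := by
    have : (0 : ℝ) < l1 := by linarith
    exact_mod_cast this
  have hq1 : (1 : ℝ) ≤ q := by exact_mod_cast hq
  set Q := q * l1 with hQ
  have hQl : (l1 : ℝ) ≤ Q := by rw [hQ]; push_cast; nlinarith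
  have hQp : 0 < Q := Nat.mul_pos hq hl1p
  have hQ' : (0 : ℝ) < Q := by exact_mod_cast hQp
  have hQ1 : 1 < Q := by
    have : (1 : ℝ) < Q := by linarith
    exact_mod_cast this
  have hQθ : 1 / (Q : ℝ) ≤ θ := by
    rw [div_le_iff₀ hQ']
    have := (div_lt_iff₀ hθ).1 hl1b
    nlinarith
  have hQL : 4 * L / Q ≤ x / 32 := by
    rw [div_le_iff₀ hQ']
    have := (div_lt_iff₀ hx0).1 hl1c
    nlinarith
  set g := gd b hb hbc Q with hg
  set k := h.comp g with hk
  have hsk : VSep k (1 / 4 + x / 4 - 4 * L / Q) := hs.gd hL hL0.le hb1 hQp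
  obtain ⟨Lk, hLk1, hLk⟩ := exists_lip k.pF (k.cF.of_le (by exact_mod_cast le_top))
  have hLk0 : 0 < Lk := by linarith
  -- choose `M`
  obtain ⟨l2, hl2⟩ := exists_nat_gt (128 * Lk / x)
  have hl2p : 0 < l2 := by
    have : (0 : ℝ) < l2 := lt_trans (by positivity) hl2
    exact_mod_cast this
  set l := l1 * l2 with hl
  have hlp : 0 < l := Nat.mul_pos hl1p hl2p
  set M := q * l with hM
  have hMp : 0 < M := Nat.mul_pos hq hlp
  have hM' : (0 : ℝ) < M := by exact_mod_cast hMp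
  have hMQ : M = Q * l2 := by rw [hM, hQ, hl]; ring
  have hMl : (l2 : ℝ) ≤ M := by
    rw [hMQ]; exact_mod_cast Nat.le_mul_of_pos_left _ hQp
  have hML : 4 * Lk / M ≤ x / 32 := by
    rw [div_le_iff₀ hM']
    have := (div_lt_iff₀ hx0).1 hl2
    nlinarith
  -- integrality
  have hQα : ∀ i : ℤ, (Q : ℝ) * (i * α) = (l1 * i * c : ℤ) := by
    intro i; rw [hQ]; push_cast; rw [← hα]; ring
  have hMα : ∀ i : ℤ, (M : ℝ) * (i * α) = (l * i * c : ℤ) := by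
    intro i; rw [hM]; push_cast; rw [← hα]; ring
  have hgcom : ∀ i : ℤ, Com g (i * α) := fun i => gd_com (hQα i)
  have hcjk : ∀ (i : ℤ) p, cj k (i * α) p = cj h (i * α) p := fun i p => cj_comp_of_com (hgcom i) p
  -- choose `N`
  have E1 := (ev_tau ha1 hMp 1 (by simp)).eventually (close_Cr k M (((1 : ℤ) : ℝ) * α) (K - 1) x hx0)
  have E1' := (ev_tau ha1 hMp (-1) (by simp)).eventually
    (close_Cr k M (((-1 : ℤ) : ℝ) * α) (K - 1) x hx0)
  have E2 := ev_gam ha0 ha1 (L := Lk) M (show 0 < min θ (x / 64) by positivity)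
  have E5 := ev_low (d := 1 / X) (by positivity) hda M
  have E6 := ev_up ha0 hcp hac hLk0 hMp (512 * Real.pi * Lk ^ 2 * M) (by positivity) hx0
  have E3 := (tendsto_one_div_atTop_nhds_zero_nat (𝕜 := ℝ)).eventually (ge_mem_nhds hθ)
  obtain ⟨N, h1, h1', h2, h5, h6, h3, hNn, hN0⟩ := (E1.and (E1'.and (E2.and (E5.and (E6.and (E3.and
    ((eventually_ge_atTop n).and (eventually_gt_atTop 0)))))))).exists
  clear E1 E1' E2 E5 E6 E3
  have hN' : (0 : ℝ) < N := by exact_mod_cast hN0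
  have hN1 : (1 : ℝ) ≤ N := by exact_mod_cast hN0
  have hM1 : (1 : ℝ) ≤ M := by exact_mod_cast hMp
  set S : ℝ := (N : ℝ) ^ a with hS
  have hS1 : 1 ≤ S := Real.one_le_rpow hN1 ha0.le
  have hS0 : 0 < S := by linarith
  have hpi := Real.pi_pos
  rw [le_min_iff] at h2
  obtain ⟨h2a, h2b⟩ := h2
  set δ : ℝ := 1 / (M * N) with hδ
  have hδ0 : 0 < δ := by positivity
  have hδN : δ ≤ 1 / N := by
    rw [hδ]; apply one_div_le_one_div_of_le hN'; nlinarith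
  set h' := k.comp (SS S M) with hh'
  set γ : ℝ := Lk * (1 + 2 * Real.pi * M * S) * δ with hγ
  have hγ0 : 0 < γ := by positivity
  have hγθ : γ ≤ θ := by
    refine le_trans ?_ h2a
    rw [hγ, div_eq_mul_one_div (Lk * _)]
    exact mul_le_mul_of_nonneg_left hδN (by positivity)
  set m := M * N with hm
  have hmp : 0 < m := Nat.mul_pos hMp hN0
  have hm' : (0 : ℝ) < m := by exact_mod_cast hmp
  -- choose `θ'`
  obtain ⟨θ', hθ'0, t1, t2, t3, t4, t5⟩ : ∃ θ' > 0, θ' ≤ θ / 2 ∧ θ' ≤ γ / 2 ∧ θ' ≤ x / m ∧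
      θ' ≤ x / (8 * L * Q) ∧ θ' ≤ 1 / (64 * m) := by
    refine ⟨min (θ / 2) (min (γ / 2) (min (x / m) (min (x / (8 * L * Q)) (1 / (64 * m))))),
      by positivity, ?_⟩
    simp
  have hfst : ∀ p, (h'.G p).1 = (g.G (h.G p)).1 := fun p => rfl
  refine ⟨⟨h', α + δ, m, γ, 512 * Real.pi * Lk ^ 2 * M * S, θ', hmp, ⟨N * (l * c) + 1, ?_⟩, hθ'0⟩, ?_, ?_⟩
  · have := hMα 1
    rw [hm, hδ]
    push_cast at this ⊢
    field_simp
    rw [mul_comm, one_mul] at this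
    nlinarith
  · have hcomS : ∀ i : ℤ, Com (SS S M) (i * α) := fun i => SS_com S (hMα i)
    constructor
    · intro j hj p
      have := h1 j hj p
      simp only
      convert this using 4 with p
      · have e := cj_comp_add (k := k) (δ := δ) (hcomS 1) p
        have e2 := hcjk 1 p
        simp only [Int.cast_one, one_mul] at e e2 ⊢
        rw [← e2, e, WW_SS]
    · intro j hj p
      have := h1' j hj p
      simp only
      convert this using 4 with p
      · have e := cj_comp_add (k := k) (δ := -δ) (hcomS (-1)) p
        have e2 := hcjk (-1) p
        simp only [Int.cast_neg, Int.cast_one, neg_mul, one_mul] at e e2 ⊢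
        rw [← e2, neg_add, e, WW_SS]
    · exact hγ0
    · exact hγθ
    · intro i p
      simp only
      have := iter_close hLk hLk0.le hS0.le (hMα i) (i * δ) p
      rw [hcjk] at this
      simp only [Int.cast_natCast] at this
      rw [mul_add]
      refine this.trans (le_of_eq ?_)
      rw [abs_of_nonneg (by positivity), hγ]; ring
    · simp only; linarith
    · simp only; linarith
    · simp only
      exact (le_div_iff₀ hm').1 t3
    · intro p
      simp only
      rw [hfst]
      exact (gd_fst hb1 _).trans hQθ
    · refine ⟨desc h.G ⁻¹' goodS (x / 8) Q, h.mG.measurable (goodS_meas _ _), ?_, ?_⟩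
      · rw [← preimage_compl, h.mG.measure_preimage (goodS_meas _ _).compl.nullMeasurableSet]
        refine (goodS_compl (by positivity) (by linarith) hQ1).trans ?_
        apply ENNReal.ofReal_le_ofReal; linarith
      · intro p p' hp hp' hd
        refine (good_inj (hb := hb) (hc := hbc) hL hL0.le hQp hb1 hbη hp hp' hd).trans ?_
        simp only
        rw [le_div_iff₀ (by positivity)] at t4
        have : L * (Q * (4 * θ') + 2 / Q) = (θ' * (8 * L * Q)) / 2 + (4 * L / Q) / 2 := by ring
        rw [this]
        linarith
    · obtain ⟨P, hP⟩ := lower_count hsk hLk hLk0.le hS0 hq hlp hN0 hα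
      refine ⟨m, ?_, ⌊4 * S⌋₊ + 1, P, ?_, ?_, ?_⟩
      · rw [hm]; nlinarith
      · push_cast
        exact h5.trans (Nat.lt_floor_add_one _).le
      · simp only
        rw [le_div_iff₀ (by positivity)] at t5
        linarith
      · have hfl : ∀ j : ℕ, j < ⌊4 * S⌋₊ + 1 → (j : ℝ) ≤ 4 * S := fun j hj =>
          (Nat.le_floor_iff (by positivity)).1 (Nat.lt_succ_iff.1 hj)
        intro j hj j' hj' hne
        obtain ⟨i, hi, hD⟩ := hP j j' (hfl j hj) (hfl j' hj') hne
        refine ⟨i, hi, le_trans ?_ hD⟩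
        rw [← hM, mul_div_assoc 2]
        linarith
    · intro ε hε hε1
      exact upper_count hLk hLk1 hS1 hMp ε hε hε1
    · exact h6
    · exact t1
    · exact t2
  · have := hsk.SS hLk hLk0.le (s := S) hMp
    refine this.mono ?_
    rw [pow_succ, ← hx]
    linarith


/-! ### limits: general lemmas -/

lemma exists_seq (K : ℕ) (hK : 1 < K) :
    ∃ σ : ℕ → St, ∀ n, StepRel K n (σ n) (σ (n + 1)) := by
  let V : ℕ → Type := fun n => {s : St // VSep s.h (1 / 4 + (1 / 2) ^ n / 4)}
  let s0 : V 0 := ⟨⟨Dif.idd, 0, 1, 1, 1, 1, one_pos, ⟨0, by simp⟩, one_pos⟩,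
    sep_id.mono (by norm_num)⟩
  choose f hf1 hf2 using fun (n : ℕ) (s : V n) => step K n hK s.1 s.2
  let τ : ∀ n, V n := fun n => Nat.rec s0 (fun n s => ⟨f n s, hf2 n s⟩) n
  exact ⟨fun n => (τ n).1, fun n => hf1 n (τ n)⟩

lemma theta_bd {θ : ℕ → ℝ} (h2 : ∀ n, θ (n + 1) ≤ θ n / 2) (n : ℕ) : θ n ≤ θ 0 * (1 / 2) ^ n := by
  induction n with
  | zero => simp
  | succ n ih => rw [pow_succ]; linarith [h2 n]

lemma theta_lim {θ : ℕ → ℝ} (h0 : ∀ n, 0 < θ n) (h2 : ∀ n, θ (n + 1) ≤ θ n / 2) :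
    Tendsto θ atTop (𝓝 0) := by
  refine squeeze_zero (fun n => (h0 n).le) (theta_bd h2) ?_
  simpa using (tendsto_pow_atTop_nhds_zero_of_lt_one (r := (1 / 2 : ℝ)) (by norm_num)
    (by norm_num)).const_mul (θ 0)

lemma lim_theta {E : Type*} [NormedAddCommGroup E] [CompleteSpace E] {θ : ℕ → ℝ}
    (h2 : ∀ n, θ (n + 1) ≤ θ n / 2) {u : ℕ → E} {C : ℝ}
    (hC : 0 ≤ C) (h0 : ∀ n, 0 < θ n) (hu : ∀ n, ‖u (n + 1) - u n‖ ≤ C * θ n) :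
    ∃ l, Tendsto u atTop (𝓝 l) ∧ ∀ n, ‖l - u n‖ ≤ 2 * C * θ n := by
  have hb : ∀ n k, ‖u (n + k) - u n‖ ≤ 2 * C * (θ n - θ (n + k)) := by
    intro n k
    induction k with
    | zero => simp
    | succ k ih =>
      have h1 := hu (n + k)
      have h3 := norm_sub_le_norm_sub_add_norm_sub (u (n + (k + 1))) (u (n + k)) (u n)
      have h4 := h2 (n + k)
      rw [← add_assoc] at h3 ⊢
      nlinarith
  have hcs : CauchySeq u := by
    refine cauchySeq_of_le_geometric (1 / 2) (C * θ 0) (by norm_num) fun n => ?_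
    rw [dist_comm, dist_eq_norm]
    refine (hu n).trans ?_
    rw [mul_assoc]
    exact mul_le_mul_of_nonneg_left (theta_bd h2 n) hC
  obtain ⟨l, hl⟩ := cauchySeq_tendsto_of_complete hcs
  refine ⟨l, hl, fun n => ?_⟩
  have h1 : Tendsto (fun k => ‖u (n + k) - u n‖) atTop (𝓝 ‖l - u n‖) :=
    ((hl.comp (tendsto_add_atTop_nat n)).congr (fun k => by simp [add_comm])).sub_const (u n) |>.norm
  refine le_of_tendsto h1 (Eventually.of_forall fun k => (hb n k).trans ?_)
  have := h0 (n + k)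
  nlinarith

lemma lim_Cr {r : ℕ} {f : ℕ → ℝ × ℝ → ℝ × ℝ} (hf : ∀ n, ContDiff ℝ (⊤ : ℕ∞) (f n))
    (hd : ∀ n, ∀ k ≤ r, ∀ p, ‖iteratedFDeriv ℝ k (fun p => f (n + 1) p - f n p) p‖ ≤ (1 / 2) ^ n) :
    ∃ F : ℝ × ℝ → ℝ × ℝ, ContDiff ℝ ((r : ℕ∞) : WithTop ℕ∞) F ∧
      (∀ p, Tendsto (fun n => f n p) atTop (𝓝 (F p))) ∧ ∀ p n, ‖F p - f n p‖ ≤ 2 * (1 / 2) ^ n := by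
  have hsum : Summable fun n : ℕ => (1 / 2 : ℝ) ^ n :=
    summable_geometric_of_lt_one (by norm_num) (by norm_num)
  have h0 : ∀ n p, ‖f (n + 1) p - f n p‖ ≤ (1 / 2) ^ n := by
    intro n p
    have := hd n 0 (Nat.zero_le _) p
    rwa [norm_iteratedFDeriv_zero] at this
  have hr : ∀ n, ContDiff ℝ ((r : ℕ∞) : WithTop ℕ∞) (f n) := fun n => (hf n).of_le (by
    exact_mod_cast le_top)
  have hF : ContDiff ℝ ((r : ℕ∞) : WithTop ℕ∞) fun p => ∑' n, (f (n + 1) p - f n p) :=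
    contDiff_tsum (v := fun _ n => (1 / 2) ^ n) (fun n => (hr (n + 1)).sub (hr n)) (fun _ _ => hsum)
      (fun k n p hk => hd n k (by exact_mod_cast hk) p)
  have hlim : ∀ p, Tendsto (fun n => f n p) atTop (𝓝 (f 0 p + ∑' n, (f (n + 1) p - f n p))) := by
    intro p
    have h1 : Summable fun n => f (n + 1) p - f n p := Summable.of_norm_bounded hsum (h0 · p)
    have h2 := (h1.hasSum.tendsto_sum_nat).const_add (f 0 p)
    refine h2.congr fun n => ?_
    rw [Finset.sum_range_sub (fun n => f n p)]
    abel
  refine ⟨fun p => f 0 p + ∑' n, (f (n + 1) p - f n p), (hr 0).add hF, hlim, fun p n => ?_⟩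
  obtain ⟨l, hl, hl2⟩ := lim_theta (θ := fun n => (1 / 2 : ℝ) ^ n) (C := 1) (u := fun n => f n p)
    (fun n => by rw [pow_succ]; linarith) zero_le_one (fun n => by positivity)
    (fun n => by simpa using h0 n p)
  beta_reduce
  rw [tendsto_nhds_unique (hlim p) hl]
  simpa using hl2 n

lemma comp_lim {E : Type*} [NormedAddCommGroup E] {f : ℕ → ℝ × ℝ → E} {F : ℝ × ℝ → E}
    (hF : Continuous F) {e : ℕ → ℝ} (he : Tendsto e atTop (𝓝 0)) (hf : ∀ p n, ‖F p - f n p‖ ≤ e n)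
    {u : ℕ → ℝ × ℝ} {l : ℝ × ℝ} (hu : Tendsto u atTop (𝓝 l)) :
    Tendsto (fun n => f n (u n)) atTop (𝓝 (F l)) := by
  refine tendsto_of_tendsto_of_dist (hF.continuousAt.tendsto.comp hu) ?_
  refine squeeze_zero (fun _ => dist_nonneg) (fun n => ?_) he
  rw [dist_eq_norm]
  exact hf _ _

lemma mp_lim {X Y : Type*} [MeasurableSpace X] {μ : Measure X} [IsProbabilityMeasure μ]
    [MetricSpace Y] [MeasurableSpace Y] [BorelSpace Y] {ν : Measure Y} [IsProbabilityMeasure ν]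
    {f : ℕ → X → Y} {F : X → Y} (hf : ∀ n, MeasurePreserving (f n) μ ν) (hF : Measurable F)
    (hlim : ∀ x, Tendsto (fun n => f n x) atTop (𝓝 (F x))) : MeasurePreserving F μ ν := by
  refine ⟨hF, ?_⟩
  have : IsProbabilityMeasure (Measure.map F μ) := Measure.isProbabilityMeasure_map hF.aemeasurable
  apply ext_of_forall_integral_eq_of_IsFiniteMeasure
  intro g
  rw [integral_map hF.aemeasurable g.continuous.measurable.aestronglyMeasurable]
  have h1 : Tendsto (fun n => ∫ x, g (f n x) ∂μ) atTop (𝓝 (∫ x, g (F x) ∂μ)) := by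
    refine tendsto_integral_of_dominated_convergence (fun _ => ‖g‖)
      (fun n => (g.continuous.measurable.comp (hf n).measurable).aestronglyMeasurable)
      (integrable_const _) (fun n => Eventually.of_forall fun x => g.norm_coe_le_norm _)
      (Eventually.of_forall fun x => (g.continuous.tendsto _).comp (hlim x))
  have h2 : ∀ n, ∫ x, g (f n x) ∂μ = ∫ y, g y ∂ν := by
    intro n
    rw [← (hf n).map_eq, integral_map (hf n).measurable.aemeasurable
      g.continuous.measurable.aestronglyMeasurable]
  simp only [h2] at h1
  exact tendsto_nhds_unique h1 tendsto_const_nhds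


/-! ### the limit objects -/

/-- everything we need to know about the limit -/
structure Lim (K : ℕ) (σ : ℕ → St) (F G : ℝ × ℝ → ℝ × ℝ) (Ψ : ℝ × ℝ → ℝ) (α : ℝ) : Prop where
  H : ∀ n, StepRel K n (σ n) (σ (n + 1))
  cF : ContDiff ℝ (((K - 1 : ℕ) : ℕ∞) : WithTop ℕ∞) F
  cG : ContDiff ℝ (((K - 1 : ℕ) : ℕ∞) : WithTop ℕ∞) G
  pF : IntPer F
  pG : IntPer G
  FG : ∀ p, F (G p) = p
  GF : ∀ p, G (F p) = p
  lF : ∀ p, Tendsto (fun n => cj (σ n).h (σ n).α p) atTop (𝓝 (F p))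
  it : ∀ (i : ℕ) p n, ‖F^[i] p - cj (σ n).h (i * (σ n).α) p‖ ≤ 2 * i * (σ n).θ
  cΨ : Continuous Ψ
  lΨ : ∀ p n, |Ψ p - ((σ n).h.G p).1| ≤ 2 * (σ n).θ
  pΨ : ∀ (p : ℝ × ℝ) (a b : ℤ), Ψ (p + ((a : ℝ), (b : ℝ))) = Ψ p + a
  FΨ : ∀ p, Ψ (F p) = Ψ p + α
  irr : Irrational α

lemma St_theta {K : ℕ} {σ : ℕ → St} (H : ∀ n, StepRel K n (σ n) (σ (n + 1))) :
    Tendsto (fun n => (σ n).θ) atTop (𝓝 0) :=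
  theta_lim (fun n => (σ n).hθ) (fun n => (H n).t1)

lemma irr_of {K : ℕ} {σ : ℕ → St} (H : ∀ n, StepRel K n (σ n) (σ (n + 1))) {α : ℝ}
    (hl : Tendsto (fun n => (σ n).α) atTop (𝓝 α)) (hα : ∀ n, |α - (σ n).α| ≤ 2 * (σ n).θ) :
    Irrational α := by
  have hmono : StrictMono fun n => (σ n).α := strictMono_nat_of_lt_succ fun n => (H n).a0
  have hlt : ∀ n, (σ n).α < α := fun n =>
    lt_of_lt_of_le (hmono (Nat.lt_succ_self n)) (hmono.monotone.ge_of_tendsto hl _)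
  rintro ⟨r, hr⟩
  have hd : (0 : ℝ) < r.den := by exact_mod_cast r.den_pos
  have hr' : α * r.den = r.num := by
    rw [← hr]; exact_mod_cast Rat.mul_den_eq_num r
  have hlim : Tendsto (fun n : ℕ => 2 * (r.den : ℝ) * (1 / 2) ^ n) atTop (𝓝 0) := by
    simpa using (tendsto_pow_atTop_nhds_zero_of_lt_one (r := (1 / 2 : ℝ)) (by norm_num)
      (by norm_num)).const_mul (2 * (r.den : ℝ))
  obtain ⟨n, hn⟩ := (hlim.eventually (gt_mem_nhds one_pos)).exists
  obtain ⟨c, hc⟩ := (σ (n + 1)).hα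
  have hq : (0 : ℝ) < (σ (n + 1)).q := by exact_mod_cast (σ (n + 1)).hq
  have e1 : (((σ (n + 1)).q * r.num - r.den * c : ℤ) : ℝ) =
      r.den * ((σ (n + 1)).q * (α - (σ (n + 1)).α)) := by
    push_cast
    rw [← hr', ← hc]; ring
  have h1 : (0 : ℝ) < (((σ (n + 1)).q * r.num - r.den * c : ℤ) : ℝ) := by
    rw [e1]
    have := hlt (n + 1)
    have : 0 < α - (σ (n + 1)).α := by linarith
    positivity
  have h2 : (1 : ℝ) ≤ (((σ (n + 1)).q * r.num - r.den * c : ℤ) : ℝ) := by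
    have : (0 : ℤ) < ((σ (n + 1)).q * r.num - r.den * c : ℤ) := by exact_mod_cast h1
    exact_mod_cast this
  rw [e1] at h2
  have h3 := (le_abs_self _).trans (hα (n + 1))
  have h4 := (H n).a2
  have h5 : (σ (n + 1)).q * (α - (σ (n + 1)).α) ≤ 2 * (1 / 2) ^ n := by nlinarith
  nlinarith

lemma exists_lim (K : ℕ) (hK : 1 < K) : ∃ σ F G Ψ α, Lim K σ F G Ψ α := by
  obtain ⟨σ, H⟩ := exists_seq K hK
  have hθ0 : ∀ n, 0 < (σ n).θ := fun n => (σ n).hθ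
  have hθ2 : ∀ n, (σ (n + 1)).θ ≤ (σ n).θ / 2 := fun n => (H n).t1
  have hθl := St_theta H
  obtain ⟨F, cF, lF, uF⟩ := lim_Cr (f := fun n => cj (σ n).h (σ n).α) (fun n => cj_cd _ _)
    (fun n => (H n).c1)
  obtain ⟨G, cG, lG, uG⟩ := lim_Cr (f := fun n => cj (σ n).h (-(σ n).α)) (fun n => cj_cd _ _)
    (fun n => (H n).c2)
  have he : Tendsto (fun n : ℕ => 2 * (1 / 2 : ℝ) ^ n) atTop (𝓝 0) := by
    simpa using (tendsto_pow_atTop_nhds_zero_of_lt_one (r := (1 / 2 : ℝ)) (by norm_num)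
      (by norm_num)).const_mul 2
  -- rotation number
  obtain ⟨α, lα, uα⟩ := lim_theta (E := ℝ) (u := fun n => (σ n).α) hθ2 zero_le_one hθ0 (fun n => by
    rw [Real.norm_eq_abs, abs_of_pos (sub_pos.2 (H n).a0), one_mul]; exact (H n).a1)
  -- the factor map
  choose Ψ lΨ uΨ using fun p => lim_theta (E := ℝ) (u := fun n => ((σ n).h.G p).1) hθ2 zero_le_one
    hθ0 (fun n => by rw [one_mul]; exact (H n).p0 p)
  simp only [mul_one, Real.norm_eq_abs] at uΨ uα
  have hper : ∀ {f : ℕ → ℝ × ℝ → ℝ × ℝ} {F : ℝ × ℝ → ℝ × ℝ}, (∀ n, IntPer (f n)) →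
      (∀ p, Tendsto (fun n => f n p) atTop (𝓝 (F p))) → IntPer F := by
    intro f F hf hF p a b
    refine tendsto_nhds_unique (hF _) ?_
    simp only [fun n => hf n p a b]
    exact (hF p).add_const _
  have h2θ : Tendsto (fun n => 2 * (σ n).θ) atTop (𝓝 0) := by simpa using hθl.const_mul 2
  have cΨ : Continuous Ψ := by
    have : TendstoUniformly (fun n p => ((σ n).h.G p).1) Ψ atTop := by
      rw [Metric.tendstoUniformly_iff]
      intro ε hε
      filter_upwards [h2θ.eventually (gt_mem_nhds hε)] with n hn p
      rw [Real.dist_eq]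
      exact (uΨ p n).trans_lt hn
    exact this.continuous (Frequently.of_forall fun n => (σ n).h.cG.continuous.fst)
  have hFi : ∀ (i : ℕ) p, Tendsto (fun n => cj (σ n).h (i * (σ n).α) p) atTop (𝓝 (F^[i] p)) := by
    intro i p
    induction i with
    | zero => simp [cj_zero]
    | succ i ih =>
      rw [Function.iterate_succ_apply']
      refine (comp_lim cF.continuous he uF ih).congr fun n => ?_
      rw [cj_cj]
      congr 1; push_cast; ring
  refine ⟨σ, F, G, Ψ, α, H, cF, cG, hper (fun n => cj_per _ _) lF, hper (fun n => cj_per _ _) lG,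
    fun p => ?_, fun p => ?_, lF, fun i p n => ?_, cΨ, uΨ, fun p a b => ?_, fun p => ?_,
    irr_of H lα uα⟩
  · refine tendsto_nhds_unique (comp_lim cF.continuous he uF (lG p)) ?_
    simp [cj_cj, cj_zero]
  · refine tendsto_nhds_unique (comp_lim cG.continuous he uG (lF p)) ?_
    simp [cj_cj, cj_zero]
  · obtain ⟨l, hl, hl2⟩ := lim_theta (C := i) (u := fun n => cj (σ n).h (i * (σ n).α) p) hθ2
      (Nat.cast_nonneg _) hθ0 (fun n => ((H n).g2 i p).trans (by
        rw [mul_comm]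
        exact mul_le_mul_of_nonneg_left (H n).g1 (Nat.cast_nonneg _)))
    rw [tendsto_nhds_unique (hFi i p) hl]
    exact hl2 n
  · refine tendsto_nhds_unique (lΨ _) ?_
    simp only [fun n => (σ n).h.pG p a b]
    exact (lΨ p).add_const _
  · refine tendsto_nhds_unique (comp_lim cΨ h2θ uΨ (lF p)) ?_
    have : ∀ n, ((σ n).h.G (cj (σ n).h (σ n).α p)).1 = ((σ n).h.G p).1 + (σ n).α := by
      intro n
      simp [cj, Dif.GF]
    simp only [this]
    exact (lΨ p).add lα


/-! ### dynamics of the limit -/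

section dyn
variable {K : ℕ} {σ : ℕ → St} {F G : ℝ × ℝ → ℝ × ℝ} {Ψ : ℝ × ℝ → ℝ} {α : ℝ}

lemma Lim.diffeo (h : Lim K σ F G Ψ α) : IsCkTorusDiffeo ((K - 1 : ℕ) : ℕ∞) (desc F) := by
  have h1 : desc F ∘ desc G = id := by
    rw [← desc_comp h.pF h.pG, ← desc_id]
    congr 1; funext p; exact h.FG p
  have h2 : desc G ∘ desc F = id := by
    rw [← desc_comp h.pG h.pF, ← desc_id]
    congr 1; funext p; exact h.GF p
  have hinj : Function.Injective (desc F) :=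
    Function.LeftInverse.injective (g := desc G) fun x => congrFun h2 x
  refine ⟨⟨hinj, Function.RightInverse.surjective (g := desc G) fun x => congrFun h1 x⟩,
    ⟨F, h.cF, fun p => (desc_proj h.pF p).symm⟩, ⟨G, h.cG, fun p => ?_⟩⟩
  have : Function.invFun (desc F) = desc G :=
    Function.invFun_eq_of_injective_of_rightInverse hinj fun x => congrFun h1 x
  rw [this, desc_proj h.pG]

lemma Lim.cont (h : Lim K σ F G Ψ α) : Continuous (desc F) := desc_cont h.pF h.cF.continuous

lemma Lim.mp (h : Lim K σ F G Ψ α) : MeasurePreserving (desc F) volume volume := by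
  refine mp_lim (f := fun n => desc (cj (σ n).h (σ n).α)) (fun n => cj_mp _ _) h.cont.measurable
    fun z => ?_
  obtain ⟨p, rfl⟩ := torusProj_surj z
  rw [desc_proj h.pF]
  simp only [fun n => desc_proj (cj_per (σ n).h (σ n).α) p]
  exact (torusProj_cont.tendsto _).comp (h.lF p)

/-- the factor map on the torus -/
noncomputable def fac (Ψ : ℝ × ℝ → ℝ) (z : Torus2) : Torus1 := (Ψ (tsec z) : Torus1)

lemma Lim.fac_proj (h : Lim K σ F G Ψ α) (p : ℝ × ℝ) : fac Ψ (torusProj p) = (Ψ p : Torus1) := by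
  obtain ⟨a, b, hab⟩ := torusProj_eq_iff.1 (torusProj_tsec (torusProj p))
  unfold fac
  rw [circle_eq_iff]
  refine ⟨a, ?_⟩
  conv_lhs => rw [hab]
  exact h.pΨ _ a b

lemma Lim.fac_cont (h : Lim K σ F G Ψ α) : Continuous (fac Ψ) := by
  rw [torusProj_quot.continuous_comp_iff.symm]
  have : fac Ψ ∘ torusProj = fun p => (Ψ p : Torus1) := funext h.fac_proj
  rw [this]
  exact (AddCircle.continuous_mk' 1).comp h.cΨ

lemma Lim.fac_T (h : Lim K σ F G Ψ α) (z : Torus2) :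
    fac Ψ (desc F z) = fac Ψ z + (α : Torus1) := by
  obtain ⟨p, rfl⟩ := torusProj_surj z
  rw [desc_proj h.pF, h.fac_proj, h.fac_proj, h.FΨ, AddCircle.coe_add]

lemma Lim.fac_mp (h : Lim K σ F G Ψ α) : MeasurePreserving (fac Ψ) volume volume := by
  refine mp_lim (f := fun n z => (desc (σ n).h.G z).1)
    (fun n => measurePreserving_fst.comp (σ n).h.mG) h.fac_cont.measurable fun z => ?_
  obtain ⟨p, rfl⟩ := torusProj_surj z
  rw [h.fac_proj]
  simp only [fun n => desc_proj (σ n).h.pG p]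
  unfold torusProj
  simp only
  refine ((AddCircle.continuous_mk' 1).tendsto _).comp ?_
  rw [tendsto_iff_dist_tendsto_zero]
  have h2θ : Tendsto (fun n => 2 * (σ n).θ) atTop (𝓝 0) := by
    simpa using (St_theta h.H).const_mul 2
  refine squeeze_zero (fun _ => dist_nonneg) (fun n => ?_) h2θ
  rw [dist_comm, Real.dist_eq]
  exact h.lΨ p n

/-- a full-measure invariant set on which the factor map is injective -/
lemma Lim.exists_A (h : Lim K σ F G Ψ α) : ∃ A : Set Torus2, MeasurableSet A ∧ volume Aᶜ = 0 ∧
    MapsTo (desc F) A A ∧ InjOn (fac Ψ) A := by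
  choose A hAm hAv hAi using fun n => (h.H n).p1
  set Z := limsup (fun n => (A n)ᶜ) atTop with hZ
  have hZm : MeasurableSet Z := MeasurableSet.measurableSet_limsup fun n => (hAm n).compl
  have hZ0 : volume Z = 0 := by
    apply measure_limsup_atTop_eq_zero
    refine ne_top_of_le_ne_top ?_ (ENNReal.tsum_le_tsum hAv)
    rw [← ENNReal.ofReal_tsum_of_nonneg (fun n => by positivity)
      (summable_geometric_of_lt_one (by norm_num) (by norm_num))]
    exact ENNReal.ofReal_ne_top
  refine ⟨⋂ i : ℕ, (desc F)^[i] ⁻¹' Zᶜ, ?_, ?_, ?_, ?_⟩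
  · exact MeasurableSet.iInter fun i => (h.mp.iterate i).measurable hZm.compl
  · rw [compl_iInter, measure_iUnion_null_iff]
    intro i
    rw [← preimage_compl, compl_compl,
      (h.mp.iterate i).measure_preimage hZm.nullMeasurableSet, hZ0]
  · intro z hz
    rw [mem_iInter] at hz ⊢
    intro i
    have := hz (i + 1)
    rwa [mem_preimage, Function.iterate_succ_apply] at this
  · intro z hz z' hz' he
    have k1 : z ∉ Z := by simpa using mem_iInter.1 hz 0
    have k2 : z' ∉ Z := by simpa using mem_iInter.1 hz' 0
    rw [hZ, mem_limsup_iff_frequently_mem, not_frequently] at k1 k2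
    simp only [mem_compl_iff, not_not] at k1 k2
    obtain ⟨p, rfl⟩ := torusProj_surj z
    obtain ⟨p', rfl⟩ := torusProj_surj z'
    rw [h.fac_proj, h.fac_proj] at he
    obtain ⟨a, ha⟩ := circle_eq_iff.1 he
    have hd : ∀ᶠ n : ℕ in atTop, dist (torusProj p) (torusProj p') ≤ (1 / 2) ^ n := by
      filter_upwards [k1, k2] with n h1 h2
      refine hAi n p p' h1 h2 ?_
      have e1 : ((((σ (n + 1)).h.G p).1 - ((σ (n + 1)).h.G p').1 : ℝ) : Torus1) =
          ((((σ (n + 1)).h.G p).1 - ((σ (n + 1)).h.G p').1 + a : ℝ) : Torus1) :=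
        circle_eq_iff.2 ⟨a, rfl⟩
      rw [e1]
      refine (circle_norm_le _).trans ?_
      have l1 := h.lΨ p (n + 1)
      have l2 := h.lΨ p' (n + 1)
      rw [abs_le] at *
      constructor <;> linarith
    have hz : dist (torusProj p) (torusProj p') ≤ 0 :=
      ge_of_tendsto (tendsto_pow_atTop_nhds_zero_of_lt_one (r := (1 / 2 : ℝ)) (by norm_num)
        (by norm_num)) hd
    exact dist_le_zero.1 hz

lemma Lim.iso (h : Lim K σ F G Ψ α) : IsoToIrrationalRotation (desc F) := by
  classical
  obtain ⟨A, hAm, hA0, hAT, hAi⟩ := h.exists_A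
  have himg : ∀ s, MeasurableSet s → MeasurableSet (fac Ψ '' (A ∩ s)) := fun s hs =>
    (hAm.inter hs).image_of_continuousOn_injOn h.fac_cont.continuousOn (hAi.mono inter_subset_left)
  have hB : MeasurableSet (fac Ψ '' A) := by simpa using himg univ MeasurableSet.univ
  have hne : A.Nonempty := by
    by_contra hcon
    rw [not_nonempty_iff_eq_empty] at hcon
    simp [hcon] at hA0
  obtain ⟨x0, hx0⟩ := hne
  let φ : Torus1 → Torus2 := fun y => if hy : y ∈ fac Ψ '' A then hy.choose else x0
  have hφ : ∀ x ∈ A, φ (fac Ψ x) = x := by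
    intro x hx
    have hy : fac Ψ x ∈ fac Ψ '' A := ⟨x, hx, rfl⟩
    simp only [φ, dif_pos hy]
    exact hAi hy.choose_spec.1 hx hy.choose_spec.2
  have hφm : Measurable φ := by
    intro s hs
    have : φ ⁻¹' s = fac Ψ '' (A ∩ s) ∪ ((fac Ψ '' A)ᶜ ∩ {_y | x0 ∈ s}) := by
      ext y
      by_cases hy : y ∈ fac Ψ '' A
      · obtain ⟨x, hx, rfl⟩ := hy
        rw [mem_preimage, hφ x hx]
        constructor
        · intro hxs; exact Or.inl ⟨x, ⟨hx, hxs⟩, rfl⟩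
        · rintro (⟨x', ⟨hx', hxs'⟩, he⟩ | ⟨h1, -⟩)
          · rwa [← hAi hx' hx he]
          · exact absurd ⟨x, hx, rfl⟩ h1
      · have h1 : φ y = x0 := by simp only [φ, dif_neg hy]
        rw [mem_preimage, h1]
        constructor
        · intro hs; exact Or.inr ⟨hy, hs⟩
        · rintro (⟨x', ⟨hx', hxs'⟩, he⟩ | ⟨-, h1⟩)
          · exact absurd ⟨x', hx', he⟩ hy
          · exact h1
    rw [this]
    exact (himg s hs).union (hB.compl.inter (MeasurableSet.const _))
  refine ⟨α, h.irr, A, fac Ψ '' A, fac Ψ, φ, hAm, hB, hA0, ?_, hAT, ?_, h.fac_cont.measurable, hφm,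
    mapsTo_image _ _, ?_, hφ, ?_, h.fac_mp.map_eq, fun x _ => h.fac_T x⟩
  · rw [← h.fac_mp.measure_preimage hB.compl.nullMeasurableSet]
    refine measure_mono_null ?_ hA0
    intro x hx hxA
    exact hx ⟨x, hxA, rfl⟩
  · rintro _ ⟨x, hx, rfl⟩
    exact ⟨desc F x, hAT hx, h.fac_T x⟩
  · rintro _ ⟨x, hx, rfl⟩
    rw [hφ x hx]; exact hx
  · rintro _ ⟨x, hx, rfl⟩
    rw [hφ x hx]

lemma rot_ergodic {α : ℝ} (hα : Irrational α) :
    Ergodic (fun y : Torus1 => y + (α : Torus1)) volume := by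
  rw [AddCircle.ergodic_add_right]
  by_contra hcon
  have hpos := Nat.pos_of_ne_zero hcon
  set d := addOrderOf (α : Torus1)
  have h1 : d • (α : Torus1) = 0 := addOrderOf_nsmul_eq_zero _
  rw [← AddCircle.coe_nsmul, nsmul_eq_mul] at h1
  have h2 : ((0 : ℝ) : Torus1) = ((d * α : ℝ) : Torus1) := by rw [h1]; simp
  obtain ⟨a, ha⟩ := circle_eq_iff.1 h2
  have hirr := hα.natCast_mul hpos.ne'
  rw [ha, zero_add] at hirr
  exact (Int.not_irrational a) hirr

lemma Lim.ergodic (h : Lim K σ F G Ψ α) : Ergodic (desc F) volume := by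
  obtain ⟨A, hAm, hA0, hAT, hAi⟩ := h.exists_A
  refine ⟨h.mp, ⟨fun {s} hs hinv => ?_⟩⟩
  have hs' : MeasurableSet (fac Ψ '' (A ∩ s)) :=
    (hAm.inter hs).image_of_continuousOn_injOn h.fac_cont.continuousOn (hAi.mono inter_subset_left)
  have hsub : fac Ψ '' (A ∩ s) ⊆ (fun y : Torus1 => y + (α : Torus1)) ⁻¹' (fac Ψ '' (A ∩ s)) := by
    rintro _ ⟨x, ⟨hx, hxs⟩, rfl⟩
    refine ⟨desc F x, ⟨hAT hx, ?_⟩, h.fac_T x⟩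
    rw [← hinv] at hxs
    exact hxs
  have hAae : ∀ᵐ x ∂(volume : Measure Torus2), x ∈ A := by
    rw [ae_iff]; exact hA0
  have hkey : ∀ x ∈ A, (x ∈ s ↔ fac Ψ x ∈ fac Ψ '' (A ∩ s)) := by
    intro x hx
    constructor
    · intro hxs; exact ⟨x, ⟨hx, hxs⟩, rfl⟩
    · rintro ⟨x', ⟨hx', hxs'⟩, he⟩
      rwa [← hAi hx' hx he]
  rw [Filter.eventuallyConst_set']
  rcases (rot_ergodic h.irr).ae_empty_or_univ_of_ae_le_preimage' hs'.nullMeasurableSet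
    (Eventually.of_forall hsub) (measure_ne_top _ _) with h1 | h1
  · left
    have h2 := h.fac_mp.quasiMeasurePreserving.tendsto_ae.eventually h1
    filter_upwards [h2, hAae] with x hx hxA
    apply propext
    exact (hkey x hxA).trans (iff_of_eq hx)
  · right
    have h2 := h.fac_mp.quasiMeasurePreserving.tendsto_ae.eventually h1
    filter_upwards [h2, hAae] with x hx hxA
    apply propext
    exact (hkey x hxA).trans (iff_of_eq hx)

end dyn


/-! ### entropy of the limit -/

section ent
variable {K : ℕ} {σ : ℕ → St} {F G : ℝ × ℝ → ℝ × ℝ} {Ψ : ℝ × ℝ → ℝ} {α : ℝ}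

lemma bowen_lt {X : Type*} [PseudoMetricSpace X] (T : X → X) (n : ℕ) (x y : X) {ε : ℝ} (hε : 0 < ε) :
    bowenDist T n x y < ε ↔ ∀ i < n, dist (T^[i] x) (T^[i] y) < ε := by
  lift ε to ℝ≥0 using hε.le
  unfold bowenDist
  rw [NNReal.coe_lt_coe, Finset.sup_lt_iff (by simpa using hε)]
  simp only [Finset.mem_range]
  refine forall₂_congr fun i _ => ?_
  rw [← NNReal.coe_lt_coe, coe_nndist]

lemma Lim.iter_proj (h : Lim K σ F G Ψ α) (i : ℕ) (p : ℝ × ℝ) :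
    (desc F)^[i] (torusProj p) = torusProj (F^[i] p) := by
  induction i generalizing p with
  | zero => rfl
  | succ i ih => rw [Function.iterate_succ_apply, desc_proj h.pF, ih, Function.iterate_succ_apply]

lemma Lim.it2 (h : Lim K σ F G Ψ α) (i : ℕ) (p : ℝ × ℝ) (n : ℕ) :
    ‖F^[i] p - cj (σ n).h (i * (σ n).α) p‖ ≤ 2 * i * (σ (n + 1)).γ := by
  have h1 := h.it i p (n + 1)
  have h2 := (h.H n).g2 i p
  have h3 := (h.H n).t2
  have h4 := norm_sub_le_norm_sub_add_norm_sub (F^[i] p) (cj (σ (n + 1)).h (i * (σ (n + 1)).α) p)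
    (cj (σ n).h (i * (σ n).α) p)
  have h5 : (0 : ℝ) ≤ i := Nat.cast_nonneg _
  nlinarith

lemma Lim.cover (h : Lim K σ F G Ψ α) (n m : ℕ) {ε : ℝ} (hε : 0 < ε) (hε1 : ε ≤ 1)
    (hm : 8 * m * (σ (n + 2)).γ ≤ ε) :
    ∃ P : Finset Torus2, (P.card : ℝ) ≤ (σ (n + 1)).U / ε ^ 2 ∧
      ∀ y, ∃ x ∈ P, bowenDist (desc F) m x y < ε := by
  classical
  obtain ⟨P, hP, hP2⟩ := (h.H n).u1 ε hε hε1
  refine ⟨P.image torusProj, ?_, fun y => ?_⟩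
  · refine le_trans ?_ hP
    exact_mod_cast Finset.card_image_le
  · obtain ⟨p, rfl⟩ := torusProj_surj y
    obtain ⟨p0, hp0, hd⟩ := hP2 p
    refine ⟨torusProj p0, Finset.mem_image_of_mem _ hp0, ?_⟩
    rw [bowen_lt _ _ _ _ hε]
    intro i hi
    rw [h.iter_proj, h.iter_proj]
    have h1 := DD_pert (F^[i] p0) (F^[i] p) (cj (σ (n + 1)).h (i * (σ (n + 1)).α) p0)
      (cj (σ (n + 1)).h (i * (σ (n + 1)).α) p)
    have h2 := h.it2 i p0 (n + 1)
    have h3 := h.it2 i p (n + 1)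
    have h4 := hd (i * (σ (n + 1)).α)
    rw [DD_comm] at h4
    have h5 : (i : ℝ) ≤ m := by exact_mod_cast hi.le
    have h6 : 0 < (σ (n + 2)).γ := (h.H (n + 1)).g0
    change DD _ _ < ε
    have h7 : (i : ℝ) * (σ (n + 2)).γ ≤ m * (σ (n + 2)).γ := by gcongr
    rw [show n + 1 + 1 = n + 2 from rfl] at h2 h3
    nlinarith

lemma Lim.gam_lim (h : Lim K σ F G Ψ α) : Tendsto (fun n => (σ (n + 1)).γ) atTop (𝓝 0) :=
  squeeze_zero (fun n => (h.H n).g0.le) (fun n => (h.H n).g1) (St_theta h.H)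

lemma Lim.exists_n (h : Lim K σ F G Ψ α) (m : ℕ) {ε : ℝ} (hε : 0 < ε) :
    ∃ n, 8 * m * (σ (n + 2)).γ ≤ ε := by
  have h1 : Tendsto (fun n => 8 * (m : ℝ) * (σ (n + 2)).γ) atTop (𝓝 0) := by
    simpa using ((h.gam_lim).comp (tendsto_add_atTop_nat 1)).const_mul (8 * (m : ℝ))
  exact (h1.eventually (ge_mem_nhds hε)).exists

/-- the set of admissible cardinalities is nonempty -/
lemma Lim.cover_ne (h : Lim K σ F G Ψ α) (m : ℕ) {ε : ℝ} (hε : 0 < ε) :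
    {N : ℕ | ∃ P : Finset Torus2, P.card = N ∧ ∀ y, ∃ x ∈ P, bowenDist (desc F) m x y < ε}.Nonempty := by
  obtain ⟨n, hn⟩ := h.exists_n m (lt_min hε one_pos)
  obtain ⟨P, -, hP⟩ := h.cover n m (lt_min hε one_pos) (min_le_right _ _) hn
  refine ⟨P.card, P, rfl, fun y => ?_⟩
  obtain ⟨x, hx, hd⟩ := hP y
  exact ⟨x, hx, hd.trans_le (min_le_left _ _)⟩

lemma Lim.num_anti (h : Lim K σ F G Ψ α) (m : ℕ) {ε ε' : ℝ} (hε' : 0 < ε') (hle : ε' ≤ ε) :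
    bowenCoverNum (desc F) m ε ≤ bowenCoverNum (desc F) m ε' := by
  obtain ⟨P, hc, hP⟩ := Nat.sInf_mem (h.cover_ne m hε')
  refine Nat.sInf_le ⟨P, hc, fun y => ?_⟩
  obtain ⟨x, hx, hd⟩ := hP y
  exact ⟨x, hx, hd.trans_le hle⟩

lemma Lim.num_le (h : Lim K σ F G Ψ α) (n m : ℕ) {ε : ℝ} (hε : 0 < ε) (hε1 : ε ≤ 1)
    (hm : 8 * m * (σ (n + 2)).γ ≤ ε) :
    (bowenCoverNum (desc F) m ε : ℝ) ≤ (σ (n + 1)).U / ε ^ 2 := by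
  obtain ⟨P, hP, hP2⟩ := h.cover n m hε hε1 hm
  refine le_trans ?_ hP
  have hle : bowenCoverNum (desc F) m ε ≤ P.card := Nat.sInf_le ⟨P, rfl, hP2⟩
  exact_mod_cast hle

lemma Lim.num_ge (h : Lim K σ F G Ψ α) (n : ℕ) {ε : ℝ} (hε : 0 < ε) (hε1 : ε ≤ 1 / 16) :
    ∃ m ≥ n, (m : ℝ) ^ (1 / (K : ℝ) ^ 4) ≤ bowenCoverNum (desc F) m ε := by
  obtain ⟨m, hm, J, P, hJ, hθ, hsep⟩ := (h.H n).lo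
  refine ⟨m, hm, hJ.trans ?_⟩
  norm_cast
  refine le_csInf (h.cover_ne m hε) ?_
  rintro _ ⟨Q, rfl, hQ⟩
  choose x hxQ hx using fun j => hQ (torusProj (P j))
  rw [← Finset.card_range J]
  refine Finset.card_le_card_of_injOn x (fun j _ => hxQ j) ?_
  intro j hj j' hj' he
  by_contra hne
  obtain ⟨i, hi, hd⟩ := hsep j (by simpa using hj) j' (by simpa using hj') hne
  have h1 := (bowen_lt _ _ _ _ hε).1 (hx j) i hi
  have h2 := (bowen_lt _ _ _ _ hε).1 (hx j') i hi
  rw [he] at h1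
  rw [h.iter_proj] at h1 h2
  have h3 := dist_triangle_left (torusProj (F^[i] (P j))) (torusProj (F^[i] (P j')))
    ((desc F)^[i] (x j'))
  change DD _ _ ≤ _ at h3
  have h4 := DD_pert (cj (σ (n + 1)).h (i * (σ (n + 1)).α) (P j))
    (cj (σ (n + 1)).h (i * (σ (n + 1)).α) (P j')) (F^[i] (P j)) (F^[i] (P j'))
  have h5 := h.it i (P j) (n + 1)
  have h6 := h.it i (P j') (n + 1)
  rw [norm_sub_rev] at h5 h6
  have h7 : (i : ℝ) ≤ m := by exact_mod_cast hi.le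
  have h8 : (i : ℝ) * (σ (n + 1)).θ ≤ m * (σ (n + 1)).θ := by
    have := (σ (n + 1)).hθ
    gcongr
  nlinarith

lemma Lim.ratio (h : Lim K σ F G Ψ α) {c : ℝ} (hc : c = 1 / ((K : ℝ) ^ 4 - 3)) (hc0 : 0 < c)
    {ε : ℝ} (hε : 0 < ε) (hε1 : ε ≤ 1) :
    Tendsto (fun m : ℕ => (bowenCoverNum (desc F) m ε : ℝ) / (m : ℝ) ^ c) atTop (𝓝 0) := by
  classical
  set C : ℝ := 8 ^ c / ε ^ c / ε ^ 2 with hC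
  have hC0 : 0 < C := by positivity
  have hCl : Tendsto (fun n : ℕ => C * (1 / 2) ^ n) atTop (𝓝 0) := by
    simpa using (tendsto_pow_atTop_nhds_zero_of_lt_one (r := (1 / 2 : ℝ)) (by norm_num)
      (by norm_num)).const_mul C
  rw [Metric.tendsto_atTop']
  intro e he
  obtain ⟨n0, hn0, hn1⟩ := ((hCl.eventually (gt_mem_nhds he)).and (eventually_ge_atTop 1)).exists
  have hev : ∀ᶠ m : ℕ in atTop, ∀ n ∈ Finset.range n0, ε < 8 * m * (σ (n + 2)).γ := by
    rw [Filter.eventually_all_finset]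
    intro n _
    have : Tendsto (fun m : ℕ => 8 * (m : ℝ) * (σ (n + 2)).γ) atTop atTop :=
      (tendsto_natCast_atTop_atTop.const_mul_atTop (by norm_num)).atTop_mul_const (h.H (n + 1)).g0
    exact this.eventually (eventually_gt_atTop ε)
  obtain ⟨m0, hm0⟩ := eventually_atTop.1 (hev.and (eventually_gt_atTop 0))
  refine ⟨m0, fun m hm => ?_⟩
  obtain ⟨hm1, hm2⟩ := hm0 m hm.le
  have hex := h.exists_n m hε
  set n := Nat.find hex with hn
  have hsp : 8 * m * (σ (n + 2)).γ ≤ ε := Nat.find_spec hex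
  have hnn : n0 ≤ n := by
    by_contra hcon
    push Not at hcon
    exact absurd hsp (not_le.2 (hm1 n (Finset.mem_range.2 hcon)))
  obtain ⟨j, hj⟩ : ∃ j, n = j + 1 := ⟨n - 1, by omega⟩
  have hmin : ε < 8 * m * (σ (n + 1)).γ := by
    have := Nat.find_min hex (m := j) (by omega)
    push Not at this
    rwa [hj]
  have hN := h.num_le n m hε hε1 hsp
  have hγ : 0 < (σ (n + 1)).γ := (h.H n).g0
  have hmr : (0 : ℝ) < m := by exact_mod_cast hm2
  rw [Real.dist_eq, sub_zero, abs_of_nonneg (by positivity)]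
  have hUnn : 0 ≤ (σ (n + 1)).U / ε ^ 2 := (Nat.cast_nonneg _).trans hN
  have hmc : 1 / (m : ℝ) ^ c ≤ 8 ^ c * (σ (n + 1)).γ ^ c / ε ^ c := by
    rw [← Real.mul_rpow (by norm_num) hγ.le, ← Real.div_rpow (by positivity) hε.le,
      one_div, ← Real.inv_rpow hmr.le]
    apply Real.rpow_le_rpow (by positivity) _ hc0.le
    rw [le_div_iff₀ hε, inv_mul_le_iff₀ hmr]
    linarith
  have hu2 := (h.H n).u2
  rw [← hc] at hu2
  calc (bowenCoverNum (desc F) m ε : ℝ) / (m : ℝ) ^ c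
      = (bowenCoverNum (desc F) m ε : ℝ) * (1 / (m : ℝ) ^ c) := by ring
    _ ≤ (σ (n + 1)).U / ε ^ 2 * (8 ^ c * (σ (n + 1)).γ ^ c / ε ^ c) := by gcongr
    _ = C * ((σ (n + 1)).U * (σ (n + 1)).γ ^ c) := by rw [hC]; ring
    _ ≤ C * (1 / 2) ^ n := by gcongr
    _ ≤ C * (1 / 2) ^ n0 := by
      apply mul_le_mul_of_nonneg_left _ hC0.le
      exact pow_le_pow_of_le_one (by norm_num) (by norm_num) hnn
    _ < e := hn0

/-- the set whose supremum is `topSlowEntFun` -/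
def entSet (T : Torus2 → Torus2) (ε : ℝ) : Set ℝ := {t : ℝ | 0 < t ∧
    0 < Filter.atTop.limsup fun n => (bowenCoverNum T n ε : ℝ≥0∞) / ENNReal.ofReal (polScale n t)}

lemma Lim.ent_le (h : Lim K σ F G Ψ α) {c : ℝ} (hc : c = 1 / ((K : ℝ) ^ 4 - 3)) (hc0 : 0 < c)
    {ε : ℝ} (hε : 0 < ε) (hε1 : ε ≤ 1) {t : ℝ} (ht : t ∈ entSet (desc F) ε) : t ≤ c := by
  by_contra hcon
  push Not at hcon
  have hl : Tendsto (fun n : ℕ => (bowenCoverNum (desc F) n ε : ℝ≥0∞) / ENNReal.ofReal (polScale n t))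
      atTop (𝓝 0) := by
    have h1 := ENNReal.tendsto_ofReal (h.ratio hc hc0 hε hε1)
    rw [ENNReal.ofReal_zero] at h1
    refine tendsto_of_tendsto_of_tendsto_of_le_of_le' tendsto_const_nhds h1
      (Eventually.of_forall fun _ => zero_le) ?_
    filter_upwards [eventually_gt_atTop 0] with m hm
    have hmr : (0 : ℝ) < m := by exact_mod_cast hm
    have hm1 : (1 : ℝ) ≤ m := by exact_mod_cast hm
    rw [ENNReal.ofReal_div_of_pos (by positivity), ENNReal.ofReal_natCast]
    apply ENNReal.div_le_div_left
    apply ENNReal.ofReal_le_ofReal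
    exact Real.rpow_le_rpow_of_exponent_le hm1 hcon.le
  have := ht.2
  rw [hl.limsup_eq] at this
  exact lt_irrefl _ this

lemma Lim.ent_mem (h : Lim K σ F G Ψ α) (hK : 1 < K) {ε : ℝ} (hε : 0 < ε) (hε1 : ε ≤ 1 / 16) :
    1 / (K : ℝ) ^ 4 ∈ entSet (desc F) ε := by
  have hK0 : (0 : ℝ) < K := by exact_mod_cast (by omega : 0 < K)
  refine ⟨by positivity, lt_of_lt_of_le one_pos (le_limsup_of_frequently_le ?_)⟩
  rw [frequently_atTop]
  intro n
  obtain ⟨m, hm, hJ⟩ := h.num_ge (n + 1) hε hε1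
  have hmr : (0 : ℝ) < m := by exact_mod_cast (by omega : 0 < m)
  refine ⟨m, by omega, ?_⟩
  have hp : 0 < polScale m (1 / (K : ℝ) ^ 4) := Real.rpow_pos_of_pos hmr _
  rw [ENNReal.le_div_iff_mul_le (Or.inl (by simpa using hp)) (Or.inl ENNReal.ofReal_ne_top), one_mul,
    ← ENNReal.ofReal_natCast]
  exact ENNReal.ofReal_le_ofReal hJ

lemma Lim.ent_anti (h : Lim K σ F G Ψ α) {ε ε' : ℝ} (hε' : 0 < ε') (hle : ε' ≤ ε) :
    entSet (desc F) ε ⊆ entSet (desc F) ε' := by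
  rintro t ⟨ht, hl⟩
  refine ⟨ht, hl.trans_le (limsup_le_limsup (Eventually.of_forall fun m => ?_))⟩
  apply ENNReal.div_le_div_right
  exact_mod_cast h.num_anti m hε' hle

lemma Lim.entropy (h : Lim K σ F G Ψ α) (hK : 1 < K) : ∃ E : ℝ,
    Tendsto (topSlowEntFun (desc F) polScale) (𝓝[>] (0 : ℝ)) (𝓝 E) ∧
    1 / (K : ℝ) ^ 4 ≤ E ∧ E < 1 / ((K : ℝ) ^ 4 - (K : ℝ) - 2) := by
  have hK2 : (2 : ℝ) ≤ K := by exact_mod_cast hK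
  have hK4 : (K : ℝ) * 8 ≤ (K : ℝ) ^ 4 := by
    have : (2 : ℝ) ^ 3 ≤ (K : ℝ) ^ 3 := by gcongr
    nlinarith
  set c : ℝ := 1 / ((K : ℝ) ^ 4 - 3) with hc
  have hc0 : 0 < c := by rw [hc]; apply one_div_pos.2; linarith
  set g := topSlowEntFun (desc F) polScale with hg
  have hgdef : ∀ ε, g ε = sSup (entSet (desc F) ε) := fun ε => rfl
  have hbd : ∀ ε, 0 < ε → ε ≤ 1 → BddAbove (entSet (desc F) ε) := fun ε h0 h1 =>
    ⟨c, fun t ht => h.ent_le hc hc0 h0 h1 ht⟩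
  have hlow : ∀ ε, 0 < ε → ε ≤ 1 / 16 → 1 / (K : ℝ) ^ 4 ≤ g ε := fun ε h0 h1 => by
    rw [hgdef]
    exact le_csSup (hbd ε h0 (by linarith)) (h.ent_mem hK h0 h1)
  have hup : ∀ ε, 0 < ε → ε ≤ 1 / 16 → g ε ≤ c := fun ε h0 h1 => by
    rw [hgdef]
    exact csSup_le ⟨_, h.ent_mem hK h0 h1⟩ fun t ht => h.ent_le hc hc0 h0 (by linarith) ht
  have hanti : ∀ ε ε', 0 < ε' → ε' ≤ ε → ε ≤ 1 / 16 → g ε ≤ g ε' := fun ε ε' h0 h1 h2 => by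
    rw [hgdef, hgdef]
    exact csSup_le_csSup (hbd ε' h0 (by linarith)) ⟨_, h.ent_mem hK (h0.trans_le h1) h2⟩
      (h.ent_anti h0 h1)
  set I := g '' Ioc 0 (1 / 16) with hI
  have hIb : BddAbove I := ⟨c, by rintro _ ⟨ε, hε, rfl⟩; exact hup ε hε.1 hε.2⟩
  have hmem : ∀ ε, 0 < ε → ε ≤ 1 / 16 → g ε ∈ I := fun ε h0 h1 => ⟨ε, ⟨h0, h1⟩, rfl⟩
  have hIn : I.Nonempty := ⟨_, hmem (1 / 16) (by norm_num) le_rfl⟩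
  refine ⟨sSup I, ?_, ?_, ?_⟩
  · rw [tendsto_order]
    constructor
    · intro a ha
      obtain ⟨_, ⟨ε0, hε0, rfl⟩, hlt⟩ := exists_lt_of_lt_csSup hIn ha
      filter_upwards [Ioc_mem_nhdsGT hε0.1] with ε hε
      exact hlt.trans_le (hanti ε0 ε hε.1 hε.2 hε0.2)
    · intro a ha
      filter_upwards [Ioc_mem_nhdsGT (show (0 : ℝ) < 1 / 16 by norm_num)] with ε hε
      exact (le_csSup hIb (hmem ε hε.1 hε.2)).trans_lt ha
  · exact (hlow (1 / 16) (by norm_num) le_rfl).trans (le_csSup hIb (hmem _ (by norm_num) le_rfl))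
  · refine lt_of_le_of_lt (csSup_le hIn (a := c) ?_) ?_
    · rintro _ ⟨ε, hε, rfl⟩; exact hup ε hε.1 hε.2
    · rw [hc]
      apply one_div_lt_one_div_of_lt
      · linarith
      · have : (2 : ℝ) ≤ K := hK2
        linarith

end ent

/-- For every integer `K > 1` there exists an ergodic `C^{K-1}`
volume-preserving diffeomorphism `T` of `𝕋²`, measure-theoretically isomorphic to an
irrational circle rotation, whose upper topological slow entropy `E` w.r.t. the
polynomial scale `a^{pol}_m(t) = m^t` satisfies `1/K⁴ ≤ E < 1/(K⁴ - K - 2)`. -/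
theorem stmt6 (K : ℕ) (hK : 1 < K) :
    ∃ T : Torus2 → Torus2,
      IsCkTorusDiffeo ((K - 1 : ℕ) : ℕ∞) T ∧
      MeasurePreserving T (volume : Measure Torus2) volume ∧
      Ergodic T (volume : Measure Torus2) ∧
      IsoToIrrationalRotation T ∧
      ∃ E : ℝ,
        Filter.Tendsto (topSlowEntFun T polScale) (𝓝[>] (0 : ℝ)) (𝓝 E) ∧
        1 / (K : ℝ) ^ 4 ≤ E ∧ E < 1 / ((K : ℝ) ^ 4 - (K : ℝ) - 2) := by
  obtain ⟨σ, F, G, Ψ, α, h⟩ := exists_lim K hK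
  exact ⟨desc F, h.diffeo, h.mp, h.ergodic, h.iso, h.entropy hK⟩
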